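/- arXiv:2404.16643 — 2 statements merged into one kernel-verified Lean document; each statement's English description precedes it below -/
import Mathlib

section
/- Let L be a finite lattice with minimum 0̂ and maximum 1̂, 0̂ ≠ 1̂; set L̄ = L∖{0̂} and Ľ = L∖{0̂,1̂}. Fix a synor complex S_*(L̄) ⊆ C̃_*(L̄) and maps ρ_k satisfying (R0)–(R2). Let γ = 1̂*ζ ∈ S_m(L̄)^{(1̂)} be a principal synor chain, let 1 ≤ ℓ ≤ m, and let γ = Σ_{χ∈X_ℓ^γ} χ*ζ_χ and γ = Σ_{χ′∈X_{ℓ−1}^γ} χ′*ζ_{χ′} be its ℓ- and (ℓ−1)-representations. Then the two chains Σ_{χ∈X_ℓ^γ} π(ρ_{ℓ−1}(∂_ℓ^{(0)}(χ)) ⧢ ζ_χ) and Σ_{χ′∈X_{ℓ−1}^γ} π(ρ_{ℓ−2}(∂_{ℓ−1}^{(0)}(χ′)) ⧢ ζ_{χ′}) are cycles supported in Ľ, and they are homologous in H̃_{m−1}(Ľ). -/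
open Finsupp

noncomputable section

variable (K : Type) [Field K]

section Core
variable (P : Type) [Preorder P]

/-- Order chains with `n` elements of the poset `P`, written as strictly
decreasing tuples `(x₀ > x₁ > ⋯ > x_{n-1})`. -/
def OChain (n : ℕ) : Type := {c : Fin n → P // StrictAnti c}

/-- The chain group in "level" `n`: the `K`-vector space with basis the order chains with
`n` elements.  Level `n` corresponds to homological degree `n - 1`; in particular
`CGrp K P 0 ≅ K` is the reduced part `C̃₋₁`. -/
abbrev CGrp (n : ℕ) : Type := OChain P n →₀ K

/-- Deletion of the `k`-th entry of an order chain. -/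
def odel {n : ℕ} (k : Fin (n + 1)) (c : OChain P (n + 1)) : OChain P n :=
  ⟨c.1 ∘ k.succAbove, c.2.comp_strictMono (Fin.strictMono_succAbove k)⟩

/-- The simplicial boundary map (of the reduced simplicial chain complex of the order
complex), from level `n+1` to level `n`. -/
def cbdry (n : ℕ) : CGrp K P (n + 1) →ₗ[K] CGrp K P n :=
  Finsupp.lsum K fun c => ∑ k : Fin (n + 1), ((-1 : K) ^ (k : ℕ)) • Finsupp.lsingle (odel P k c)

/-- The cycles in level `n` (every level-0 chain, i.e. multiple of the empty chain,
is a cycle). -/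
def cyclesAt : (n : ℕ) → Submodule K (CGrp K P n)
  | 0 => ⊤
  | (n + 1) => LinearMap.ker (cbdry K P n)

/-- The boundaries in level `n`. -/
def boundariesIn (n : ℕ) : Submodule K (CGrp K P n) :=
  LinearMap.range (cbdry K P n)

/-- `H̃_{n-1}(P) ≠ 0`: nontriviality of the reduced simplicial homology (with coefficients
in `K`) of the order complex of `P` in degree `n - 1` (level `n`). -/
def RHomNontrivial (n : ℕ) : Prop := ¬ cyclesAt K P n ≤ boundariesIn K P n

/-- The subspace of chains all of whose elements lie in the subset `J ⊆ P`
(the chain group of the subposet `J`). -/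
def chainsIn (J : Set P) (n : ℕ) : Submodule K (CGrp K P n) :=
  Finsupp.supported K K {c : OChain P n | ∀ r, c.1 r ∈ J}

/-- Transport of chain groups along an equality of levels. -/
def castCGrp {a b : ℕ} (h : a = b) : CGrp K P a ≃ₗ[K] CGrp K P b :=
  Finsupp.domLCongr (Equiv.cast (congrArg (OChain P) h))

end Core


section Synor
variable (P : Type) [PartialOrder P]

/-- For a family `S` of graded pieces (with `S n x` the piece of homological degree `n`,
i.e. level `n+1`, sitting over `x ∈ P`) and a subset `J ⊆ P`, the part of the complex
lying over `J`: at level `0` it is all of `C̃₋₁ = K`, and at level `n+1` it is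
`⊕_{x ∈ J} S_n^{(x)}`. -/
def idealPart (S : (n : ℕ) → P → Submodule K (CGrp K P (n + 1))) (J : Set P) :
    (nn : ℕ) → Submodule K (CGrp K P nn)
  | 0 => ⊤
  | (n + 1) => ⨆ x ∈ J, S n x

/-- A synor complex for the finite poset `P`: a strictly `P`-graded subcomplex
`S_*(P) ⊆ C̃_*(P)` of the reduced simplicial chain complex of the order complex of `P`
(we identify the injective `P`-graded chain map `φ` with the inclusion of its image) with:
`S_i(P) = ⊕_{x ∈ P} S_i(P)^{(x)}` with `S_i(P)^{(x)}` contained in the span of the order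
chains with largest element `x` (`graded`); `∂(S_i(P)^{(x)}) ⊆ ⊕_{y<x} S_{i-1}(P)^{(y)}`
(`strict`; for degree `0` the boundary lands in `C̃₋₁ = K` automatically); (S1)
`dim_K S_i(P)^{(x)} = dim_K H̃_{i-1}(P_{<x})` (`dim_eq`, the dimension of the reduced
homology being the dimension of the cycles minus the dimension of the boundaries); and
(S2) for every order ideal `J ⊆ P` the inclusion `S_*(P)^J ⊆ C̃_*(J)` induces an
isomorphism on homology (`quasiIso`: surjectivity and injectivity of the induced map). -/
structure SynorComplex : Type where
  S : (n : ℕ) → P → Submodule K (CGrp K P (n + 1))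
  graded : ∀ (n : ℕ) (x : P),
    S n x ≤ Finsupp.supported K K {c : OChain P (n + 1) | c.1 0 = x}
  strict : ∀ (n : ℕ) (x : P), ∀ f ∈ S (n + 1) x,
    cbdry K P (n + 1) f ∈ ⨆ y ∈ Set.Iio x, S n y
  dim_eq : ∀ (n : ℕ) (x : P),
    Module.finrank K ↥(S n x) =
      Module.finrank K ↥(cyclesAt K {y : P // y < x} n) -
        Module.finrank K ↥(boundariesIn K {y : P // y < x} n)
  quasiIso : ∀ J : Set P, IsLowerSet J → ∀ nn : ℕ,
    (∀ z ∈ cyclesAt K P nn ⊓ chainsIn K P J nn,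
        ∃ a ∈ cyclesAt K P nn ⊓ idealPart K P S J nn,
          z - a ∈ Submodule.map (cbdry K P nn) (chainsIn K P J (nn + 1))) ∧
    (∀ a ∈ idealPart K P S J nn,
        a ∈ Submodule.map (cbdry K P nn) (chainsIn K P J (nn + 1)) →
        a ∈ Submodule.map (cbdry K P nn) (idealPart K P S J (nn + 1)))

end Synor

section Repr
variable (P : Type) [PartialOrder P]

/-- Concatenation `χ * c` of two order chains, valid when every entry of `c` is strictly
below every entry of `χ`. -/
def concatOC {a b : ℕ} (χ : OChain P a) (c : OChain P b)
    (h : ∀ (s : Fin b) (r : Fin a), c.1 s < χ.1 r) : OChain P (a + b) :=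
  ⟨fun r => if hr : (r : ℕ) < a then χ.1 ⟨r, hr⟩
            else c.1 ⟨(r : ℕ) - a, by have := r.2; omega⟩, by
    intro p q hpq
    dsimp only
    rcases lt_or_ge (q : ℕ) a with hq | hq
    · have hp : (p : ℕ) < a := by have := Fin.lt_def.mp hpq; omega
      rw [dif_pos hp, dif_pos hq]
      exact χ.2 (Fin.mk_lt_mk.mpr (Fin.lt_def.mp hpq))
    · rw [dif_neg (not_lt.mpr hq)]
      rcases lt_or_ge (p : ℕ) a with hp | hp
      · rw [dif_pos hp]
        exact h _ _
      · rw [dif_neg (not_lt.mpr hp)]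
        exact c.2 (Fin.mk_lt_mk.mpr (by have := Fin.lt_def.mp hpq; omega))⟩

open Classical in
/-- The linear map `χ * (-)` prepending the order chain `χ` to every order chain of a
chain (declared as `0` on the basis chains that are not entirely below `χ`). -/
def prependC {a b : ℕ} (χ : OChain P a) : CGrp K P b →ₗ[K] CGrp K P (a + b) :=
  Finsupp.lsum K fun c =>
    if h : ∀ (s : Fin b) (r : Fin a), c.1 s < χ.1 r then
      Finsupp.lsingle (concatOC P χ c h)
    else 0

/-- `X_ℓ^γ` (for `s = ℓ + 1`): the set of order chains with `s` elements occurring as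
initial segments of order chains in the support of `γ`. -/
def initSegs {m : ℕ} (γ : CGrp K P (m + 1)) (s : ℕ) (h : s ≤ m + 1) :
    Set (OChain P s) :=
  {χ | ∃ c ∈ γ.support, ∀ r : Fin s, c.1 (Fin.castLE h r) = χ.1 r}

end Repr

section Multi
variable (L : Type) [SemilatticeSup L]

/-- Order multichains with `n` entries (length `n - 1`) in the lattice `L`:
weakly decreasing tuples `(c₀ ≥ c₁ ≥ ⋯ ≥ c_{n-1})`. -/
def MChain (n : ℕ) : Type := {c : Fin n → L // Antitone c}

/-- `∂ₖ^{(j)}`: deletion of the `k`-th entry of an order multichain. -/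
def mdel {n : ℕ} (k : Fin (n + 1)) (c : MChain L (n + 1)) : MChain L n :=
  ⟨c.1 ∘ k.succAbove, c.2.comp_monotone (Fin.strictMono_succAbove k).monotone⟩

/-- Concatenation `c · c′` of tuples. -/
def concatT {a b n : ℕ} (h : a + b = n) (u : Fin a → L) (v : Fin b → L) : Fin n → L :=
  fun r => if hr : (r : ℕ) < a then u ⟨r, hr⟩ else v ⟨(r : ℕ) - a, by have := r.2; omega⟩

/-- The operator `τ` sending a tuple `(a₀, …, a_{n-1})` to the multichain
`(a₀ ∨ ⋯ ∨ a_{n-1} ≥ a₁ ∨ ⋯ ∨ a_{n-1} ≥ ⋯ ≥ a_{n-1})` of suffix joins. -/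
def tauMul {n : ℕ} (a : Fin n → L) : MChain L n :=
  ⟨fun r => (Finset.Ici r).sup' ⟨r, Finset.mem_Ici.mpr le_rfl⟩ a, by
    intro r r' hrr'
    apply Finset.sup'_le
    intro s hs
    exact Finset.le_sup' _ (Finset.mem_Ici.mpr (le_trans hrr' (Finset.mem_Ici.mp hs)))⟩

/-- An `(i,j)`-shuffle, in block form: `IsShuffleBlocks t σ` says that the permutation `σ`
is monotone on the preimage of the values `{0, …, t-1}` (the first block) and on the
preimage of the remaining values (the second block).  An `(i,j)`-shuffle of
`{0, 1, …, i+j+1}` is exactly `IsShuffleBlocks (i+1)`. -/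
def IsShuffleBlocks {n : ℕ} (t : ℕ) (σ : Equiv.Perm (Fin n)) : Prop :=
  (∀ p q : Fin n, p < q → (σ p : ℕ) < t → (σ q : ℕ) < t → σ p < σ q) ∧
  (∀ p q : Fin n, p < q → t ≤ (σ p : ℕ) → t ≤ (σ q : ℕ) → σ p < σ q)

/-- The index `ℓ - 1` (with the convention `0 - 1 = 0`). -/
def prevIdx {n : ℕ} (ℓ : Fin n) : Fin n := ⟨(ℓ : ℕ) - 1, by have := ℓ.2; omega⟩

/-- The set `A₁^{i,j}` of pairs `(ℓ, σ)` with `σ` an `(i,j)`-shuffle, `ℓ ≥ 1`,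
`σ(ℓ-1) ∈ {0,…,i}` and `σ(ℓ) ∈ {i+1,…,i+j+1}`. -/
def shuffleA1 (i j : ℕ) : Set (Fin (i + j + 2) × Equiv.Perm (Fin (i + j + 2))) :=
  {p | IsShuffleBlocks (i + 1) p.2 ∧ 1 ≤ (p.1 : ℕ) ∧
       (p.2 (prevIdx p.1) : ℕ) ≤ i ∧ i + 1 ≤ (p.2 p.1 : ℕ)}

/-- The set `A₂^{i,j}` of pairs `(ℓ, σ)` with `σ` an `(i,j)`-shuffle, `ℓ ≥ 1`,
`σ(ℓ-1) ∈ {i+1,…,i+j+1}` and `σ(ℓ) ∈ {0,…,i}`. -/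
def shuffleA2 (i j : ℕ) : Set (Fin (i + j + 2) × Equiv.Perm (Fin (i + j + 2))) :=
  {p | IsShuffleBlocks (i + 1) p.2 ∧ 1 ≤ (p.1 : ℕ) ∧
       i + 1 ≤ (p.2 (prevIdx p.1) : ℕ) ∧ (p.2 p.1 : ℕ) ≤ i}

/-- The set `A₃^{i,j}` of pairs `(ℓ, σ)` with `σ` an `(i,j)`-shuffle and
`σ(ℓ-1), σ(ℓ) ∈ {0,…,i}`, the condition on `σ(ℓ-1)` being regarded as true for `ℓ = 0`. -/
def shuffleA3 (i j : ℕ) : Set (Fin (i + j + 2) × Equiv.Perm (Fin (i + j + 2))) :=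
  {p | IsShuffleBlocks (i + 1) p.2 ∧
       (1 ≤ (p.1 : ℕ) → (p.2 (prevIdx p.1) : ℕ) ≤ i) ∧ (p.2 p.1 : ℕ) ≤ i}

/-- `M̃`: the `K`-vector space with basis the order multichains with `n` entries
(length `n-1`).  In particular `MGrp K L 0 ≅ K` is `M̃₋₁`, spanned by the empty
multichain. -/
abbrev MGrp (n : ℕ) : Type := MChain L n →₀ K

/-- The simplicial boundary `∂ = Σ (-1)^j ∂^{(j)}` on multichains. -/
def mbdry (n : ℕ) : MGrp K L (n + 1) →ₗ[K] MGrp K L n :=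
  Finsupp.lsum K fun c => ∑ k : Fin (n + 1), ((-1 : K) ^ (k : ℕ)) • Finsupp.lsingle (mdel L k c)

/-- Transport along an equality of lengths. -/
def castMGrp {a b : ℕ} (h : a = b) : MGrp K L a ≃ₗ[K] MGrp K L b :=
  Finsupp.domLCongr (Equiv.cast (congrArg (MChain L) h))

open Classical in
/-- The shuffle product of two basis multichains, with `p` resp. `q` entries:
`c ⧢ c′ = Σ_{σ ∈ S_{p-1,q-1}} sgn(σ) · τ((c·c′)_σ)`. -/
def shufPair {p q : ℕ} (c : MChain L p) (c' : MChain L q) : MGrp K L (p + q) :=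
  ∑ σ : Equiv.Perm (Fin (p + q)),
    if IsShuffleBlocks p σ then
      ((Equiv.Perm.sign σ : ℤ) : K) • Finsupp.single (tauMul L (concatT L rfl c.1 c'.1 ∘ ⇑σ)) 1
    else 0

/-- The shuffle product `⧢ : M̃_{p-1} ⊗ M̃_{q-1} → M̃_{p+q-1}` as a bilinear map. -/
def shufLin (p q : ℕ) : MGrp K L p →ₗ[K] MGrp K L q →ₗ[K] MGrp K L (p + q) :=
  Finsupp.lsum K fun c =>
    LinearMap.toSpanSingleton K _
      (Finsupp.lsum K fun c' => LinearMap.toSpanSingleton K _ (shufPair K L c c'))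

open Classical in
/-- The projection `π : M̃ → C̃` which is the identity on strictly decreasing multichains
and vanishes on multichains with a repeated entry. -/
def piProj (n : ℕ) : MGrp K L n →ₗ[K] CGrp K L n :=
  Finsupp.lsum K fun c =>
    if h : StrictAnti c.1 then Finsupp.lsingle (⟨c.1, h⟩ : OChain L n) else 0

/-- The inclusion `C̃ → M̃` of order chains into multichains. -/
def iotaCM (n : ℕ) : CGrp K L n →ₗ[K] MGrp K L n :=
  Finsupp.lmapDomain K K fun c => (⟨c.1, c.2.antitone⟩ : MChain L n)

end Multi

section Punct

/-- Transport of order chains along an equality of lengths. -/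
def castOC {P : Type} [Preorder P] {a b : ℕ} (h : a = b) (c : OChain P a) : OChain P b :=
  h ▸ c

/-- `L̄ = L ∖ {0̂}`, the lattice `L` with its bottom element removed.  It is closed under
joins, hence a join-semilattice. -/
abbrev Punct (L : Type) [Lattice L] [OrderBot L] : Type := {y : L // y ≠ ⊥}

instance instPunctSemilatticeSup (L : Type) [Lattice L] [OrderBot L] :
    SemilatticeSup (Punct L) :=
  Subtype.semilatticeSup (by
    intro x y hx _ h
    exact hx (le_bot_iff.mp (h ▸ le_sup_left)))

end Punct

namespace Words

section Basic
variable (P : Type)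

/-- The free `K`-module on the words (lists) in `P`. -/
abbrev WGrp : Type := List P →₀ K

variable {P}

/-- Prepending a letter to every word. -/
def wcons (x : P) : WGrp K P →ₗ[K] WGrp K P := Finsupp.lmapDomain K K (List.cons x)

/-- The boundary of a word: the alternating sum of its letter deletions. -/
def wbdryList : List P → WGrp K P
  | [] => 0
  | x :: w => Finsupp.single w 1 - wcons K x (wbdryList w)

/-- The linear extension of `wbdryList`. -/
def wbdry : WGrp K P →ₗ[K] WGrp K P := Finsupp.linearCombination K (wbdryList K)

/-- The grading involution, multiplying a word of length `n` by `(-1)ⁿ`. -/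
def wsign : WGrp K P →ₗ[K] WGrp K P :=
  Finsupp.linearCombination K fun u => Finsupp.single u ((-1) ^ u.length)

@[simp] lemma wcons_single (x : P) (w : List P) (a : K) :
    wcons K x (Finsupp.single w a) = Finsupp.single (x :: w) a := by
  simp [wcons]

@[simp] lemma wbdry_single (w : List P) : wbdry K (Finsupp.single w 1) = wbdryList K w := by
  simp [wbdry]

@[simp] lemma wsign_single (w : List P) :
    wsign K (Finsupp.single w 1) = (-1 : K) ^ w.length • Finsupp.single w 1 := by
  simp [wsign]

lemma wbdry_wcons (x : P) (f : WGrp K P) :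
    wbdry K (wcons K x f) = f - wcons K x (wbdry K f) := by
  have h : wbdry K ∘ₗ wcons K x = LinearMap.id - wcons K x ∘ₗ wbdry K := by
    ext1 w; ext1; simp [wbdryList]
  exact LinearMap.congr_fun h f

lemma wsign_wcons (x : P) (f : WGrp K P) :
    wsign K (wcons K x f) = - wcons K x (wsign K f) := by
  have h : wsign K ∘ₗ wcons K x = - wcons K x ∘ₗ wsign K := by
    ext1 w; ext1; simp [pow_succ]
  exact LinearMap.congr_fun h f

lemma wsign_wbdryList (u : List P) :
    wsign K (wbdryList K u) = - ((-1 : K) ^ u.length • wbdryList K u) := by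
  induction u with
  | nil => simp [wbdryList]
  | cons x u ih =>
    rw [wbdryList, map_sub, wsign_wcons, ih]
    simp [pow_succ, smul_sub, -Finsupp.smul_single]
    abel

end Basic

section Shuffle
variable {P : Type} [SemilatticeSup P]

/-- The shuffle product of two words, the entries being replaced by joins of heads. -/
def shufList : List P → List P → WGrp K P
  | [], v => Finsupp.single v 1
  | x :: u, [] => Finsupp.single (x :: u) 1
  | x :: u, y :: v =>
    wcons K (x ⊔ y) (shufList u (y :: v) + (-1 : K) ^ (u.length + 1) • shufList (x :: u) v)
  termination_by u v => u.length + v.length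

/-- The bilinear extension of `shufList`. -/
def wshuf : WGrp K P →ₗ[K] WGrp K P →ₗ[K] WGrp K P :=
  Finsupp.linearCombination K fun u => Finsupp.linearCombination K (shufList K u)

@[simp] lemma wshuf_single (u v : List P) :
    wshuf K (Finsupp.single u 1) (Finsupp.single v 1) = shufList K u v := by
  simp [wshuf]

lemma shufList_nil_right (u : List P) : shufList K u [] = Finsupp.single u 1 := by
  cases u <;> simp [shufList]

@[simp] lemma wshuf_nil_left (g : WGrp K P) : wshuf K (Finsupp.single [] 1) g = g := by
  have h : wshuf K (Finsupp.single ([] : List P) 1) = LinearMap.id := by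
    ext1 w; ext1; simp [shufList]
  exact LinearMap.congr_fun h g

@[simp] lemma wshuf_nil_right (f : WGrp K P) : wshuf K f (Finsupp.single [] 1) = f := by
  have h : (wshuf K).flip (Finsupp.single ([] : List P) 1) = LinearMap.id := by
    ext1 w; ext1; simp [shufList_nil_right]
  exact LinearMap.congr_fun h f

lemma wshuf_wcons (x y : P) (f g : WGrp K P) :
    wshuf K (wcons K x f) (wcons K y g) =
      wcons K (x ⊔ y) (wshuf K f (wcons K y g) + wshuf K (wsign K (wcons K x f)) g) := by
  have h : (wshuf K).compl₁₂ (wcons K x) (wcons K y) =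
      ((wshuf K).compl₂ (wcons K y) + (wshuf K) ∘ₗ (wsign K ∘ₗ wcons K x)).compr₂
        (wcons K (x ⊔ y)) := by
    ext1 u; ext1; ext1 v; ext1
    simp [shufList, -Finsupp.smul_single]
  exact LinearMap.congr_fun₂ h f g

/-- The Leibniz rule for the shuffle product of two words. -/
lemma wbdry_shufList (u v : List P) :
    wbdry K (shufList K u v) = wshuf K (wbdryList K u) (Finsupp.single v 1) +
      (-1 : K) ^ u.length • wshuf K (Finsupp.single u 1) (wbdryList K v) := by
  induction u, v using shufList.induct with
  | case1 v => simp [shufList, wbdryList]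
  | case2 x u => simp [shufList, wbdryList]
  | case3 x u y v ih1 ih2 =>
    have hx : Finsupp.single (x :: u) (1 : K) = wcons K x (Finsupp.single u 1) := by simp
    have hy : Finsupp.single (y :: v) (1 : K) = wcons K y (Finsupp.single v 1) := by simp
    have e1 : wshuf K (wcons K x (wbdryList K u)) (Finsupp.single (y :: v) 1) =
        wcons K (x ⊔ y) (wshuf K (wbdryList K u) (Finsupp.single (y :: v) 1) +
          (-1 : K) ^ u.length • wshuf K (wcons K x (wbdryList K u)) (Finsupp.single v 1)) := by
      rw [hy, wshuf_wcons, wsign_wcons, wsign_wbdryList]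
      simp
    have e2 : wshuf K (Finsupp.single (x :: u) 1) (wcons K y (wbdryList K v)) =
        wcons K (x ⊔ y) (wshuf K (Finsupp.single u 1) (wcons K y (wbdryList K v)) +
          (-1 : K) ^ (u.length + 1) • wshuf K (Finsupp.single (x :: u) 1) (wbdryList K v)) := by
      rw [hx, wshuf_wcons, ← hx, wsign_single]
      simp [-Finsupp.smul_single]
    rw [shufList, wbdry_wcons, map_add, map_smul, ih1, ih2]
    simp only [wbdryList, map_sub, LinearMap.sub_apply, List.length_cons, e1, e2, wshuf_single,
      smul_sub, map_add, map_smul, smul_add, smul_smul, pow_succ]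
    have hs : ((-1 : K) ^ u.length) * (-1) ^ u.length = 1 := by
      rw [← mul_pow]; simp
    simp only [mul_neg, mul_one, neg_mul, neg_smul, neg_neg, hs, one_smul]
    abel

/-- The Leibniz rule for the shuffle product. -/
lemma wbdry_wshuf (f g : WGrp K P) :
    wbdry K (wshuf K f g) =
      wshuf K (wbdry K f) g + wshuf K (wsign K f) (wbdry K g) := by
  have h : (wshuf K (P := P)).compr₂ (wbdry K) =
      (wshuf K) ∘ₗ wbdry K + (wshuf K).compl₁₂ (wsign K) (wbdry K) := by
    ext1 u; ext1; ext1 v; ext1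
    simp [wbdry_shufList, -Finsupp.smul_single]
  exact LinearMap.congr_fun₂ h f g

end Shuffle

section Degenerate
variable {P : Type}

open Classical in
/-- The projection killing the words with two equal adjacent letters. -/
def wpi : WGrp K P →ₗ[K] WGrp K P :=
  Finsupp.linearCombination K fun w => if w.IsChain (· ≠ ·) then Finsupp.single w 1 else 0

lemma wpi_single_of_isChain {w : List P} (h : w.IsChain (· ≠ ·)) :
    wpi K (Finsupp.single w 1) = Finsupp.single w 1 := by
  simp [wpi, h]

lemma wpi_single_of_not_isChain {w : List P} (h : ¬ w.IsChain (· ≠ ·)) :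
    wpi K (Finsupp.single w 1) = 0 := by
  simp [wpi, h]

lemma wpi_wcons_wpi (x : P) (f : WGrp K P) :
    wpi K (wcons K x (wpi K f)) = wpi K (wcons K x f) := by
  have h : wpi K ∘ₗ wcons K x ∘ₗ wpi K = wpi K ∘ₗ wcons K x := by
    ext1 w; ext1
    by_cases hw : w.IsChain (· ≠ ·)
    · simp [wpi_single_of_isChain K hw]
    · have hxw : ¬ (x :: w).IsChain (· ≠ ·) := fun h => hw h.tail
      simp [wpi_single_of_not_isChain K hw, wpi_single_of_not_isChain K hxw]
  exact LinearMap.congr_fun h f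

lemma wpi_wcons_wcons_self (x : P) (f : WGrp K P) :
    wpi K (wcons K x (wcons K x f)) = 0 := by
  have h : wpi K ∘ₗ wcons K x ∘ₗ wcons K x = 0 := by
    ext1 w; ext1
    have hw : ¬ (x :: x :: w).IsChain (· ≠ ·) := by simp
    simp [wpi_single_of_not_isChain K hw]
  exact LinearMap.congr_fun h f

lemma wpi_wbdryList_of_not_isChain {w : List P} (h : ¬ w.IsChain (· ≠ ·)) :
    wpi K (wbdryList K w) = 0 := by
  induction w with
  | nil => simp at h
  | cons x w ih =>
    cases w with
    | nil => simp at h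
    | cons y t =>
      by_cases hxy : x = y
      · subst hxy
        simp [wbdryList, wpi_wcons_wcons_self]
      · have ht : ¬ (y :: t).IsChain (· ≠ ·) := fun ht =>
          h (List.isChain_cons_cons.mpr ⟨hxy, ht⟩)
        rw [wbdryList, map_sub, wpi_single_of_not_isChain K ht, ← wpi_wcons_wpi, ih ht]
        simp

lemma wpi_wbdry_wpi (f : WGrp K P) : wpi K (wbdry K (wpi K f)) = wpi K (wbdry K f) := by
  have h : wpi K ∘ₗ wbdry K ∘ₗ wpi K = wpi K ∘ₗ wbdry K (P := P) := by
    ext1 w; ext1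
    by_cases hw : w.IsChain (· ≠ ·)
    · simp [wpi_single_of_isChain K hw]
    · simp [wpi_single_of_not_isChain K hw, wpi_wbdryList_of_not_isChain K hw]
  exact LinearMap.congr_fun h f

end Degenerate

section OrderChains
variable {P : Type} [Preorder P]

/-- The word of an order chain, extended linearly. -/
def wordC (n : ℕ) : CGrp K P n →ₗ[K] WGrp K P :=
  Finsupp.lmapDomain K K fun c => List.ofFn c.1

@[simp] lemma wordC_single {n : ℕ} (c : OChain P n) (a : K) :
    wordC K n (Finsupp.single c a) = Finsupp.single (List.ofFn c.1) a := by
  simp [wordC]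

lemma wordC_injective (n : ℕ) : Function.Injective (wordC K (P := P) n) :=
  Finsupp.mapDomain_injective fun _ _ h => Subtype.ext (List.ofFn_injective h)

lemma wbdryList_ofFn {α : Type} {n : ℕ} (c : Fin (n + 1) → α) :
    wbdryList K (List.ofFn c) = ∑ k : Fin (n + 1),
      (-1 : K) ^ (k : ℕ) • Finsupp.single (List.ofFn (c ∘ k.succAbove)) 1 := by
  induction n with
  | zero => simp [wbdryList]
  | succ n ih =>
    rw [List.ofFn_succ, wbdryList, ih, map_sum, sub_eq_add_neg, ← Finset.sum_neg_distrib]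
    conv_rhs => rw [Fin.sum_univ_succ]
    congr 1
    · simp [Function.comp_def]
    · refine Finset.sum_congr rfl fun k _ => ?_
      rw [List.ofFn_succ (f := c ∘ k.succ.succAbove)]
      simp [pow_succ, Function.comp_def]

lemma wordC_cbdry (n : ℕ) (f : CGrp K P (n + 1)) :
    wordC K n (cbdry K P n f) = wbdry K (wordC K (n + 1) f) := by
  have h : wordC K n ∘ₗ cbdry K P n = wbdry K ∘ₗ wordC K (n + 1) := by
    ext1 c; ext1
    rw [LinearMap.comp_apply, LinearMap.comp_apply, LinearMap.comp_apply, LinearMap.comp_apply,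
      Finsupp.lsingle_apply, wordC_single, wbdry_single, wbdryList_ofFn, cbdry, Finsupp.lsum_single,
      LinearMap.sum_apply, map_sum]
    refine Finset.sum_congr rfl fun k _ => ?_
    rw [LinearMap.smul_apply, map_smul, Finsupp.lsingle_apply, wordC_single]
    rfl
  exact LinearMap.congr_fun h f

lemma wordC_castCGrp {a b : ℕ} (h : a = b) (f : CGrp K P a) :
    wordC K b (castCGrp K P h f) = wordC K a f := by
  subst h
  simp [castCGrp]

lemma wpi_wordC {n : ℕ} (f : CGrp K P n) : wpi K (wordC K n f) = wordC K n f := by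
  have h : wpi K ∘ₗ wordC K n = wordC K (P := P) n := by
    ext1 c; ext1
    have hc : (List.ofFn c.1).IsChain (· ≠ ·) := by
      refine List.Pairwise.isChain (List.pairwise_ofFn.mpr fun i j hij => ?_)
      exact (c.2 hij).ne'
    simp [wpi_single_of_isChain K hc]
  exact LinearMap.congr_fun h f

lemma wsign_wordC {n : ℕ} (f : CGrp K P n) :
    wsign K (wordC K n f) = (-1 : K) ^ n • wordC K n f := by
  have h : wsign K ∘ₗ wordC K n = (-1 : K) ^ n • wordC K (P := P) n := by
    ext1 c; ext1
    simp
  exact LinearMap.congr_fun h f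

lemma exists_oChain_ofFn_eq {n : ℕ} {w : List P} (hn : w.length = n)
    (hw : w.Pairwise (· > ·)) : ∃ c : OChain P n, List.ofFn c.1 = w := by
  subst hn
  exact ⟨⟨w.get, fun i j hij => List.pairwise_iff_get.mp hw i j hij⟩, List.ofFn_get w⟩

lemma pairwise_ofFn_oChain {n : ℕ} (c : OChain P n) : (List.ofFn c.1).Pairwise (· > ·) :=
  List.pairwise_ofFn.mpr fun _ _ hij => c.2 hij

end OrderChains

section Multichains
variable {P : Type} [SemilatticeSup P]

/-- The word of a multichain, extended linearly. -/
def wordM (n : ℕ) : MGrp K P n →ₗ[K] WGrp K P :=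
  Finsupp.lmapDomain K K fun c => List.ofFn c.1

@[simp] lemma wordM_single {n : ℕ} (c : MChain P n) (a : K) :
    wordM K n (Finsupp.single c a) = Finsupp.single (List.ofFn c.1) a := by
  simp [wordM]

lemma wordM_castMGrp {a b : ℕ} (h : a = b) (f : MGrp K P a) :
    wordM K b (castMGrp K P h f) = wordM K a f := by
  subst h
  simp [castMGrp]

lemma wordM_iotaCM {n : ℕ} (f : CGrp K P n) :
    wordM K n (iotaCM K P n f) = wordC K n f := (Finsupp.mapDomain_comp (v := f)).symm

lemma wordC_piProj {n : ℕ} (f : MGrp K P n) :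
    wordC K n (piProj K P n f) = wpi K (wordM K n f) := by
  have h : wordC K n ∘ₗ piProj K P n = wpi K ∘ₗ wordM K n := by
    ext1 c; ext1
    by_cases hc : StrictAnti c.1
    · obtain ⟨d, hd⟩ : ∃ d : OChain P n, d = ⟨c.1, hc⟩ := ⟨_, rfl⟩
      have hw := wpi_wordC K (Finsupp.single d 1)
      have hdc : d.1 = c.1 := congrArg Subtype.val hd
      rw [wordC_single, hdc] at hw
      have hp : piProj K P n (Finsupp.single c 1) = Finsupp.single d 1 := by
        simp only [piProj, Finsupp.lsum_single, dif_pos hc, hd]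
        rfl
      simp [hp, hw, hdc]
    · have hw : ¬ (List.ofFn c.1).IsChain (· ≠ ·) := by
        refine fun h => hc ?_
        have h' : (List.ofFn c.1).IsChain (· > ·) := by
          rw [List.isChain_iff_getElem] at h ⊢
          intro i hi
          have := h i hi
          simp only [List.getElem_ofFn] at this ⊢
          exact lt_of_le_of_ne (c.2 (Fin.mk_le_mk.mpr (Nat.le_succ i))) this.symm
        exact fun i j hij => List.pairwise_ofFn.mp (List.isChain_iff_pairwise.mp h') hij
      simp [piProj, hc, wpi_single_of_not_isChain K hw]
  exact LinearMap.congr_fun h f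

end Multichains

section ShufflePermutations
open Equiv

/-- The permutation of `Fin (n + 1)` with first value `k` whose remaining values are arranged
according to `e`. -/
def permCons {n : ℕ} (k : Fin (n + 1)) (e : Perm (Fin n)) : Perm (Fin (n + 1)) :=
  k.cycleRange.symm * Perm.decomposeFin.symm (0, e)

@[simp] lemma permCons_zero {n : ℕ} (k : Fin (n + 1)) (e : Perm (Fin n)) :
    permCons k e 0 = k := by
  simp [permCons]

@[simp] lemma permCons_succ {n : ℕ} (k : Fin (n + 1)) (e : Perm (Fin n)) (i : Fin n) :
    permCons k e i.succ = k.succAbove (e i) := by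
  simp [permCons]

lemma sign_permCons {n : ℕ} (k : Fin (n + 1)) (e : Perm (Fin n)) :
    Perm.sign (permCons k e) = (-1) ^ (k : ℕ) * Perm.sign e := by
  simp [permCons, Fin.sign_cycleRange, Perm.decomposeFin.symm_sign]

lemma permCons_bijective (n : ℕ) :
    Function.Bijective fun x : Fin (n + 1) × Perm (Fin n) => permCons x.1 x.2 := by
  rw [Fintype.bijective_iff_injective_and_card]
  refine ⟨?_, Fintype.card_congr Perm.decomposeFin.symm⟩
  rintro ⟨k, e⟩ ⟨k', e'⟩ h
  have hk : k = k' := by simpa using congrArg (fun s : Perm (Fin (n + 1)) => s 0) h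
  subst hk
  refine Prod.ext rfl (Equiv.ext fun i => ?_)
  have := congrArg (fun s : Perm (Fin (n + 1)) => s i.succ) h
  simpa using this

lemma sum_perm_succ {M : Type} [AddCommMonoid M] {n : ℕ} (F : Perm (Fin (n + 1)) → M) :
    ∑ s, F s = ∑ k : Fin (n + 1), ∑ e : Perm (Fin n), F (permCons k e) := by
  rw [← Fintype.sum_prod_type']
  exact ((permCons_bijective n).sum_comp F).symm

lemma perm_eq_one_of_strictMono {n : ℕ} {s : Perm (Fin n)} (h : StrictMono s) : s = 1 := by
  have := (StrictMono.range_inj h strictMono_id).mp (by simp [s.surjective.range_eq])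
  exact Equiv.ext fun i => congrFun this i

lemma isShuffleBlocks_one {n : ℕ} (p : ℕ) : IsShuffleBlocks p (1 : Perm (Fin n)) :=
  ⟨fun _ _ h _ _ => h, fun _ _ h _ _ => h⟩

lemma isShuffleBlocks_zero_iff {n : ℕ} {s : Perm (Fin n)} : IsShuffleBlocks 0 s ↔ s = 1 := by
  refine ⟨fun h => perm_eq_one_of_strictMono fun i j hij => h.2 i j hij ?_ ?_, ?_⟩
  · omega
  · omega
  · rintro rfl
    exact isShuffleBlocks_one 0

lemma isShuffleBlocks_self_iff {n : ℕ} {s : Perm (Fin n)} : IsShuffleBlocks n s ↔ s = 1 := by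
  refine ⟨fun h => perm_eq_one_of_strictMono fun i j hij => h.1 i j hij ?_ ?_, ?_⟩
  · exact (s i).2
  · exact (s j).2
  · rintro rfl
    exact isShuffleBlocks_one n

lemma isShuffleBlocks_permCons_zero_iff {n p : ℕ} {e : Perm (Fin n)} :
    IsShuffleBlocks (p + 1) (permCons 0 e) ↔ IsShuffleBlocks p e := by
  constructor
  · rintro ⟨h1, h2⟩
    refine ⟨fun i j hij hi hj => ?_, fun i j hij hi hj => ?_⟩
    · simpa using h1 i.succ j.succ (by simpa using hij) (by simpa using hi) (by simpa using hj)
    · simpa using h2 i.succ j.succ (by simpa using hij) (by simpa using hi) (by simpa using hj)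
  · rintro ⟨h1, h2⟩
    refine ⟨fun i j hij hi hj => ?_, fun i j hij hi hj => ?_⟩
    · induction j using Fin.cases with
      | zero => simp at hij
      | succ j =>
        induction i using Fin.cases with
        | zero => simp
        | succ i =>
          simpa using h1 i j (by simpa using hij) (by simpa using hi) (by simpa using hj)
    · induction j using Fin.cases with
      | zero => simp at hij
      | succ j =>
        induction i using Fin.cases with
        | zero => simp
        | succ i =>
          simpa using h2 i j (by simpa using hij) (by simpa using hi) (by simpa using hj)

lemma val_succAbove_lt_iff {n : ℕ} (k : Fin (n + 1)) (i : Fin n) :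
    ((k.succAbove i : Fin (n + 1)) : ℕ) < k ↔ (i : ℕ) < k := by
  rw [← Fin.lt_def, Fin.succAbove_lt_iff_castSucc_lt]
  rfl

lemma isShuffleBlocks_permCons_self_iff {n : ℕ} {k : Fin (n + 1)} {e : Perm (Fin n)} :
    IsShuffleBlocks k (permCons k e) ↔ IsShuffleBlocks k e := by
  constructor
  · rintro ⟨h1, h2⟩
    refine ⟨fun i j hij hi hj => ?_, fun i j hij hi hj => ?_⟩
    · have := h1 i.succ j.succ (by simpa using hij)
        (by rwa [permCons_succ, val_succAbove_lt_iff]) (by rwa [permCons_succ, val_succAbove_lt_iff])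
      simpa using this
    · have := h2 i.succ j.succ (by simpa using hij)
        (by rwa [permCons_succ, ← not_lt, val_succAbove_lt_iff, not_lt])
        (by rwa [permCons_succ, ← not_lt, val_succAbove_lt_iff, not_lt])
      simpa using this
  · rintro ⟨h1, h2⟩
    refine ⟨fun i j hij hi hj => ?_, fun i j hij hi hj => ?_⟩
    · induction j using Fin.cases with
      | zero => simp at hij
      | succ j =>
        induction i using Fin.cases with
        | zero => simp at hi
        | succ i =>
          simp only [permCons_succ, val_succAbove_lt_iff] at hi hj ⊢
          exact Fin.strictMono_succAbove k (h1 i j (by simpa using hij) hi hj)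
    · induction j using Fin.cases with
      | zero => simp at hij
      | succ j =>
        induction i using Fin.cases with
        | zero =>
          simp only [permCons_zero, permCons_succ] at hj ⊢
          exact lt_of_le_of_ne hj (Fin.succAbove_ne k _).symm
        | succ i =>
          simp only [permCons_succ, ← not_lt, val_succAbove_lt_iff] at hi hj ⊢
          rw [not_lt] at hi hj
          have := Fin.strictMono_succAbove k (h2 i j (by simpa using hij) hi hj)
          simpa using this

/-- The first value of a shuffle is the first letter of one of the two blocks. -/
lemma isShuffleBlocks_apply_zero {n p : ℕ} {s : Perm (Fin (n + 1))}
    (h : IsShuffleBlocks p s) (hp : p ≤ n) : (s 0 : ℕ) = 0 ∨ (s 0 : ℕ) = p := by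
  rcases lt_or_ge (s 0 : ℕ) p with h0 | h0
  · left
    by_contra hne
    have hpos : 0 < s.symm 0 := by
      rw [Fin.pos_iff_ne_zero]
      intro h'
      rw [Equiv.symm_apply_eq] at h'
      exact hne (by rw [← h']; rfl)
    have := h.1 0 (s.symm 0) hpos h0 (by simp; omega)
    simp at this
  · right
    by_contra hne
    have hpos : 0 < s.symm ⟨p, by omega⟩ := by
      rw [Fin.pos_iff_ne_zero]
      intro h'
      rw [Equiv.symm_apply_eq] at h'
      exact hne (by rw [← h'])
    have := h.2 0 _ hpos h0 (by simp)
    simp only [apply_symm_apply, Fin.lt_def] at this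
    omega

end ShufflePermutations

section ShuffleComparison
open Equiv

section Concatenation
variable {P : Type}

lemma concatT_zero_left {q n : ℕ} (h : 0 + q = n) (c : Fin 0 → P) (c' : Fin q → P) :
    concatT P h c c' = c' ∘ Fin.cast (by omega) := by
  funext r
  simp only [concatT, Nat.not_lt_zero, dite_false]
  rfl

lemma concatT_zero_right {p n : ℕ} (h : p + 0 = n) (c : Fin p → P) (c' : Fin 0 → P) :
    concatT P h c c' = c ∘ Fin.cast (by omega) := by
  funext r
  have hr : (r : ℕ) < p := by omega
  simp only [concatT, hr, dite_true]
  rfl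

lemma concatT_comp_permCons_zero {p q n : ℕ} (h : p + 1 + q = n + 1) (h' : p + q = n)
    (c : Fin (p + 1) → P) (c' : Fin q → P) (e : Perm (Fin n)) :
    concatT P h c c' ∘ permCons 0 e = Fin.cons (c 0) (concatT P h' (Fin.tail c) c' ∘ e) := by
  funext r
  induction r using Fin.cases with
  | zero => simp [concatT]
  | succ r =>
    simp only [Function.comp_apply, permCons_succ, Fin.zero_succAbove, Fin.cons_succ, concatT,
      Fin.val_succ, Nat.add_lt_add_iff_right, Nat.add_sub_add_right, Fin.tail]
    rfl

lemma concatT_comp_permCons_self {p q n : ℕ} (h : p + (q + 1) = n + 1) (h' : p + q = n)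
    (c : Fin p → P) (c' : Fin (q + 1) → P) (e : Perm (Fin n)) (k : Fin (n + 1))
    (hk : (k : ℕ) = p) :
    concatT P h c c' ∘ permCons k e = Fin.cons (c' 0) (concatT P h' c (Fin.tail c') ∘ e) := by
  funext r
  induction r using Fin.cases with
  | zero => simp [concatT, hk]
  | succ r =>
    have hlt := val_succAbove_lt_iff k (e r)
    simp only [Function.comp_apply, permCons_succ, Fin.cons_succ, concatT]
    by_cases hr : (e r : ℕ) < p
    · have hr' : ((k.succAbove (e r) : Fin (n + 1)) : ℕ) < p := by
        rw [← hk]; exact hlt.mpr (by omega)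
      rw [dif_pos hr, dif_pos hr']
      congr 1
      rw [Fin.mk.injEq, Fin.succAbove_of_castSucc_lt]
      · rfl
      · rw [Fin.lt_def, hk]; exact hr
    · have hr' : ¬ ((k.succAbove (e r) : Fin (n + 1)) : ℕ) < p := by
        rw [← hk, hlt]; omega
      rw [dif_neg hr, dif_neg hr', Fin.tail]
      have hv : ((k.succAbove (e r) : Fin (n + 1)) : ℕ) = e r + 1 := by
        rw [Fin.succAbove_of_le_castSucc, Fin.val_succ]
        rw [Fin.le_def, hk]
        exact not_lt.mp hr
      congr 1
      simp only [Fin.ext_iff, Fin.val_succ, hv]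
      omega

end Concatenation

variable {P : Type} [SemilatticeSup P]

lemma tauMul_apply_le_iff {n : ℕ} {t : Fin n → P} {r : Fin n} {x : P} :
    (tauMul P t).1 r ≤ x ↔ ∀ s, r ≤ s → t s ≤ x :=
  (Finset.sup'_le_iff ⟨r, Finset.mem_Ici.mpr le_rfl⟩ t).trans (by simp)

lemma le_tauMul_apply {n : ℕ} (t : Fin n → P) {r s : Fin n} (h : r ≤ s) :
    t s ≤ (tauMul P t).1 r :=
  tauMul_apply_le_iff.mp le_rfl s h

lemma tauMul_of_antitone {n : ℕ} {t : Fin n → P} (ht : Antitone t) : (tauMul P t).1 = t :=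
  funext fun _ => le_antisymm (tauMul_apply_le_iff.mpr fun _ hs => ht hs)
    (le_tauMul_apply t le_rfl)

lemma tauMul_succ {n : ℕ} (t : Fin (n + 1) → P) (r : Fin n) :
    (tauMul P t).1 r.succ = (tauMul P (Fin.tail t)).1 r := by
  refine le_antisymm (tauMul_apply_le_iff.mpr fun s hs => ?_)
    (tauMul_apply_le_iff.mpr fun s hs => ?_)
  · obtain ⟨s, rfl⟩ := Fin.exists_succ_eq.mpr (Fin.pos_iff_ne_zero.mp
      (lt_of_lt_of_le (Fin.succ_pos r) hs))
    exact le_tauMul_apply (Fin.tail t) (Fin.succ_le_succ_iff.mp hs)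
  · exact le_tauMul_apply t (Fin.succ_le_succ_iff.mpr hs)

lemma tauMul_concatT_zero {p q n : ℕ} (h : p + 1 + (q + 1) = n + 1) {c : Fin (p + 1) → P}
    {c' : Fin (q + 1) → P} (hc : Antitone c) (hc' : Antitone c') (s : Perm (Fin (n + 1))) :
    (tauMul P (concatT P h c c' ∘ s)).1 0 = c 0 ⊔ c' 0 := by
  refine le_antisymm (tauMul_apply_le_iff.mpr fun r _ => ?_) (sup_le ?_ ?_)
  · simp only [Function.comp_apply, concatT]
    split_ifs
    · exact le_sup_of_le_left (hc (Fin.zero_le _))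
    · exact le_sup_of_le_right (hc' (Fin.zero_le _))
  · have := le_tauMul_apply (concatT P h c c' ∘ s) (Fin.zero_le (s.symm 0))
    simpa [concatT] using this
  · have := le_tauMul_apply (concatT P h c c' ∘ s) (Fin.zero_le (s.symm ⟨p + 1, by omega⟩))
    simpa [concatT] using this

open Classical in
/-- The signed sum over all shuffle permutations is the recursive shuffle product of words. -/
lemma sum_shuffles_eq_shufList {p q n : ℕ} (h : p + q = n) (c : Fin p → P) (c' : Fin q → P)
    (hc : Antitone c) (hc' : Antitone c') :
    (∑ s : Perm (Fin n), if IsShuffleBlocks p s then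
      ((Perm.sign s : ℤ) : K) • Finsupp.single (List.ofFn (tauMul P (concatT P h c c' ∘ s)).1) 1
      else 0) = shufList K (List.ofFn c) (List.ofFn c') := by
  induction n generalizing p q with
  | zero =>
    obtain ⟨rfl, rfl⟩ : p = 0 ∧ q = 0 := by omega
    simp [isShuffleBlocks_zero_iff, shufList]
  | succ n ih =>
    rcases p with _ | p
    · obtain rfl : q = n + 1 := by omega
      rw [Finset.sum_eq_single 1]
      · rw [if_pos (isShuffleBlocks_one 0), concatT_zero_left, tauMul_of_antitone]
        · simp [shufList]
        · exact hc'
      · intro s _ hs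
        rw [if_neg (mt isShuffleBlocks_zero_iff.mp hs)]
      · simp
    rcases q with _ | q
    · obtain rfl : p = n := by omega
      rw [Finset.sum_eq_single 1]
      · rw [if_pos (isShuffleBlocks_one _), concatT_zero_right, tauMul_of_antitone]
        · simp [shufList]
        · exact hc
      · intro s _ hs
        rw [if_neg (mt isShuffleBlocks_self_iff.mp hs)]
      · simp
    have hofFn (s : Perm (Fin (n + 1))) :
        List.ofFn (tauMul P (concatT P h c c' ∘ s)).1 =
          (c 0 ⊔ c' 0) :: List.ofFn (tauMul P (Fin.tail (concatT P h c c' ∘ s))).1 := by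
      rw [List.ofFn_succ, tauMul_concatT_zero h hc hc']
      simp [tauMul_succ]
    have hk : (⟨p + 1, by omega⟩ : Fin (n + 1)) ≠ 0 := by simp [Fin.ext_iff]
    rw [sum_perm_succ, Fintype.sum_eq_add 0 ⟨p + 1, by omega⟩ hk.symm]
    · conv_rhs => rw [List.ofFn_succ, List.ofFn_succ, shufList, ← List.ofFn_succ, ← List.ofFn_succ]
      have ih1 := ih (show p + (q + 1) = n by omega) (Fin.tail c) c'
        (fun i j hij => hc (Fin.succ_le_succ_iff.mpr hij)) hc'
      have ih2 := ih (show p + 1 + q = n by omega) c (Fin.tail c') hc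
        (fun i j hij => hc' (Fin.succ_le_succ_iff.mpr hij))
      unfold Fin.tail at ih1 ih2
      rw [← ih1, ← ih2, map_add, map_smul, map_sum, map_sum, Finset.smul_sum]
      congr 1
      · refine Finset.sum_congr rfl fun e _ => ?_
        rw [hofFn, concatT_comp_permCons_zero h (by omega), Fin.tail_cons,
          isShuffleBlocks_permCons_zero_iff]
        split_ifs
        · simp [sign_permCons]
          rfl
        · simp
      · refine Finset.sum_congr rfl fun e _ => ?_
        rw [hofFn, concatT_comp_permCons_self h (by omega) _ _ _ _ rfl, Fin.tail_cons]
        have := isShuffleBlocks_permCons_self_iff (k := (⟨p + 1, by omega⟩ : Fin (n + 1))) (e := e)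
        simp only at this
        rw [this]
        split_ifs
        · simp [sign_permCons]
          rfl
        · simp
    · rintro k ⟨hk0, hkp⟩
      refine Finset.sum_eq_zero fun e _ => if_neg fun hs => ?_
      rcases isShuffleBlocks_apply_zero hs (by omega) with h0 | h0
      · exact hk0 (Fin.ext (by simpa using h0))
      · exact hkp (Fin.ext (by simpa using h0))

lemma wordM_shufPair {p q : ℕ} (c : MChain P p) (c' : MChain P q) :
    wordM K (p + q) (shufPair K P c c') = shufList K (List.ofFn c.1) (List.ofFn c'.1) := by
  rw [← sum_shuffles_eq_shufList K rfl c.1 c'.1 c.2 c'.2, shufPair, map_sum]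
  refine Finset.sum_congr rfl fun s _ => ?_
  rw [apply_ite (wordM K (p + q)), map_zero, map_smul, wordM_single]

lemma wordM_shufLin {p q : ℕ} (f : MGrp K P p) (g : MGrp K P q) :
    wordM K (p + q) (shufLin K P p q f g) = wshuf K (wordM K p f) (wordM K q g) := by
  have h : (shufLin K P p q).compr₂ (wordM K (p + q)) =
      (wshuf K).compl₁₂ (wordM K p) (wordM K q) := by
    ext1 c; ext1; ext1 c'; ext1
    simp only [LinearMap.comp_apply, LinearMap.compr₂_apply, LinearMap.compl₁₂_apply,
      Finsupp.lsingle_apply, wordM_single, wshuf_single, ← wordM_shufPair]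
    simp [shufLin]
  exact LinearMap.congr_fun₂ h f g

/-- The word of the projected shuffle product of two chains. -/
lemma wordC_piProj_shufLin {p q n : ℕ} (h : p + q = n) (f : CGrp K P p) (g : CGrp K P q) :
    wordC K n (piProj K P n (castMGrp K P h
      (shufLin K P p q (iotaCM K P p f) (iotaCM K P q g)))) =
    wpi K (wshuf K (wordC K p f) (wordC K q g)) := by
  rw [wordC_piProj, wordM_castMGrp, wordM_shufLin, wordM_iotaCM, wordM_iotaCM]

end ShuffleComparison

section Supported
variable {K} {M : Type} [AddCommGroup M] [Module K M]

lemma map_mem_of_supported {α : Type} {s : Set α} {F : (α →₀ K) →ₗ[K] M} {p : Submodule K M}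
    (h : ∀ w ∈ s, F (Finsupp.single w 1) ∈ p) {f : α →₀ K}
    (hf : f ∈ Finsupp.supported K K s) : F f ∈ p := by
  rw [Finsupp.supported_eq_span_single] at hf
  refine (Submodule.span_le (p := p.comap F)).mpr ?_ hf
  rintro _ ⟨w, hw, rfl⟩
  exact h w hw

lemma map_eq_of_supported {α : Type} {s : Set α} {F G : (α →₀ K) →ₗ[K] M}
    (h : ∀ w ∈ s, F (Finsupp.single w 1) = G (Finsupp.single w 1)) {f : α →₀ K}
    (hf : f ∈ Finsupp.supported K K s) : F f = G f := by
  have := map_mem_of_supported (F := F - G) (p := ⊥) (fun w hw => by simp [h w hw]) hf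
  simpa [sub_eq_zero] using this

end Supported

section Splitting
variable {P : Type}

/-- Concatenation of words, as a bilinear map. -/
def wappend : WGrp K P →ₗ[K] WGrp K P →ₗ[K] WGrp K P :=
  Finsupp.linearCombination K fun u => Finsupp.lmapDomain K K (u ++ ·)

@[simp] lemma wappend_single (u v : List P) :
    wappend K (Finsupp.single u 1) (Finsupp.single v 1) = Finsupp.single (u ++ v) 1 := by
  simp [wappend]

lemma wappend_nil (f : WGrp K P) : wappend K (Finsupp.single [] 1) f = f := by
  rw [wappend, Finsupp.linearCombination_single, one_smul]
  exact Finsupp.mapDomain_id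

lemma wappend_wcons (x : P) (f g : WGrp K P) :
    wappend K (wcons K x f) g = wcons K x (wappend K f g) := by
  have h : wappend K ∘ₗ wcons K x = (wappend K).compr₂ (wcons K x) := by
    ext1 u; ext1; ext1 v; ext1
    simp
  exact LinearMap.congr_fun₂ h f g

lemma wbdryList_append (u v : List P) :
    wbdryList K (u ++ v) = wappend K (wbdryList K u) (Finsupp.single v 1) +
      (-1 : K) ^ u.length • wappend K (Finsupp.single u 1) (wbdryList K v) := by
  induction u with
  | nil => simp [wbdryList, wappend_nil]
  | cons x u ih =>
    have hx : Finsupp.single (x :: u) (1 : K) = wcons K x (Finsupp.single u 1) := by simp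
    rw [List.cons_append, wbdryList, ih, hx, wappend_wcons, wbdryList]
    simp [wappend_wcons, pow_succ]
    abel

lemma wbdryList_mem_supported_length {n : ℕ} {u : List P} (hu : u.length = n + 1) :
    wbdryList K u ∈ Finsupp.supported K K {w : List P | w.length = n} := by
  induction u generalizing n with
  | nil => simp at hu
  | cons x u ih =>
    have hu' : u.length = n := by simpa using hu
    refine Submodule.sub_mem _ (Finsupp.single_mem_supported K 1 hu') ?_
    cases n with
    | zero => simp [List.length_eq_zero_iff.mp hu', wbdryList]
    | succ n =>
      refine map_mem_of_supported (fun w hw => ?_) (ih hu')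
      rw [wcons_single]
      exact Finsupp.single_mem_supported K 1 (by simpa using hw)

/-- Applying a bilinear map to the initial segment of length `k` of a word and to the
remaining final segment. -/
def wsplit (k : ℕ) (f : WGrp K P →ₗ[K] WGrp K P →ₗ[K] WGrp K P) : WGrp K P →ₗ[K] WGrp K P :=
  Finsupp.linearCombination K fun w =>
    f (Finsupp.single (w.take k) 1) (Finsupp.single (w.drop k) 1)

@[simp] lemma wsplit_single (k : ℕ) (f : WGrp K P →ₗ[K] WGrp K P →ₗ[K] WGrp K P) (w : List P) :
    wsplit K k f (Finsupp.single w 1) =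
      f (Finsupp.single (w.take k) 1) (Finsupp.single (w.drop k) 1) := by
  simp [wsplit]

lemma wsplit_wappend {k : ℕ} (f : WGrp K P →ₗ[K] WGrp K P →ₗ[K] WGrp K P) {g : WGrp K P}
    (hg : g ∈ Finsupp.supported K K {w : List P | w.length = k}) (v : List P) :
    wsplit K k f (wappend K g (Finsupp.single v 1)) = f g (Finsupp.single v 1) := by
  refine map_eq_of_supported (F := wsplit K k f ∘ₗ (wappend K).flip (Finsupp.single v 1))
    (G := f.flip (Finsupp.single v 1)) (fun u hu => ?_) hg
  simp [List.take_left' hu, List.drop_left' hu]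

lemma wsplit_wbdryList {k : ℕ} (f : WGrp K P →ₗ[K] WGrp K P →ₗ[K] WGrp K P) {w : List P}
    (hw : k + 1 ≤ w.length) :
    wsplit K k f (wbdryList K w) = wsplit K (k + 1) (f ∘ₗ wbdry K) (Finsupp.single w 1) +
      (-1 : K) ^ (k + 1) • wsplit K (k + 1)
        (((wappend K).compr₂ (wsplit K k f)).compl₂ (wbdry K)) (Finsupp.single w 1) := by
  have hu : (w.take (k + 1)).length = k + 1 := by simp [hw]
  conv_lhs => rw [← List.take_append_drop (k + 1) w, wbdryList_append, hu, map_add, map_smul,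
    wsplit_wappend K f (wbdryList_mem_supported_length K hu)]
  simp

variable {K} in
/-- For a cycle of words all of whose final segments are cycles, the initial segments are
cycles too. -/
lemma wsplit_comp_wbdry_eq_zero {k : ℕ} {z : WGrp K P}
    (hz : z ∈ Finsupp.supported K K {w : List P | k ≤ w.length}) (hz0 : wbdry K z = 0)
    (h : ∀ f : WGrp K P →ₗ[K] WGrp K P →ₗ[K] WGrp K P, wsplit K k (f.compl₂ (wbdry K)) z = 0)
    (f : WGrp K P →ₗ[K] WGrp K P →ₗ[K] WGrp K P) : wsplit K k (f ∘ₗ wbdry K) z = 0 := by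
  cases k with
  | zero =>
    have := map_eq_of_supported (F := wsplit K 0 (f ∘ₗ wbdry K)) (G := 0)
      (fun w _ => by simp [wbdryList]) hz
    simpa using this
  | succ k =>
    have := map_eq_of_supported (F := wsplit K k f ∘ₗ wbdry K)
      (G := wsplit K (k + 1) (f ∘ₗ wbdry K) + (-1 : K) ^ (k + 1) • wsplit K (k + 1)
        (((wappend K).compr₂ (wsplit K k f)).compl₂ (wbdry K)))
      (fun w hw => by simpa using wsplit_wbdryList K f hw) hz
    simpa [hz0, h] using this.symm

end Splitting

section Homotopy
variable {P : Type} [SemilatticeSup P] {K} {R : WGrp K P →ₗ[K] WGrp K P}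

/-- The Leibniz rule for the shuffle of the image under `R` of the initial
segments with the final segments. -/
lemma wbdry_wsplit_wshuf {k : ℕ} {z : WGrp K P}
    (hR : ∀ u : List P, u.Pairwise (· > ·) →
      wbdry K (R (Finsupp.single u 1)) = R (wbdryList K u))
    (hRs : ∀ u : List P, u.Pairwise (· > ·) →
      wsign K (R (Finsupp.single u 1)) = (-1 : K) ^ u.length • R (Finsupp.single u 1))
    (hz : z ∈ Finsupp.supported K K {w : List P | k ≤ w.length ∧ w.Pairwise (· > ·)}) :
    wbdry K (wsplit K k (wshuf K ∘ₗ R) z) =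
      wsplit K k ((wshuf K ∘ₗ R) ∘ₗ wbdry K) z +
        (-1 : K) ^ k • wsplit K k ((wshuf K ∘ₗ R).compl₂ (wbdry K)) z := by
  refine map_eq_of_supported (F := wbdry K ∘ₗ wsplit K k (wshuf K ∘ₗ R))
    (G := wsplit K k ((wshuf K ∘ₗ R) ∘ₗ wbdry K) +
        (-1 : K) ^ k • wsplit K k ((wshuf K ∘ₗ R).compl₂ (wbdry K))) (fun w hw => ?_) hz
  have hu : (w.take k).Pairwise (· > ·) := hw.2.sublist (List.take_sublist k w)
  simp [wbdry_wshuf, hR _ hu, hRs _ hu, hw.1]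

variable (R) in
/-- The shuffle of the image under `R` of the initial segment of length `a + 1` of a word with
its overlapping final segment starting at position `a`. -/
def overlapShuf (a : ℕ) : WGrp K P →ₗ[K] WGrp K P :=
  Finsupp.linearCombination K fun w =>
    wshuf K (R (Finsupp.single (w.take (a + 1)) 1)) (Finsupp.single (w.drop a) 1)

@[simp] lemma overlapShuf_single (a : ℕ) (w : List P) :
    overlapShuf R a (Finsupp.single w 1) =
      wshuf K (R (Finsupp.single (w.take (a + 1)) 1)) (Finsupp.single (w.drop a) 1) := by
  simp [overlapShuf]

variable (R) in
/-- The shuffle of the image under `R` of a word, prolonged by the first letter of a second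
word, with the second word. -/
def headShuf : WGrp K P →ₗ[K] WGrp K P →ₗ[K] WGrp K P :=
  LinearMap.flip <| Finsupp.linearCombination K fun v =>
    (wshuf K).flip (Finsupp.single v 1) ∘ₗ R ∘ₗ (wappend K).flip (Finsupp.single (v.take 1) 1)

lemma headShuf_apply_single (g : WGrp K P) (v : List P) :
    headShuf R g (Finsupp.single v 1) =
      wshuf K (R (wappend K g (Finsupp.single (v.take 1) 1))) (Finsupp.single v 1) := by
  simp [headShuf]

variable (R) in
/-- The shuffle of the image under `R` of a word with a second word, prolonged by the letters
of the first from position `a` on. -/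
def lastShuf (a : ℕ) : WGrp K P →ₗ[K] WGrp K P →ₗ[K] WGrp K P :=
  Finsupp.linearCombination K fun u =>
    wshuf K (R (Finsupp.single u 1)) ∘ₗ wappend K (Finsupp.single (u.drop a) 1)

lemma lastShuf_single_apply (a : ℕ) (u : List P) (g : WGrp K P) :
    lastShuf R a (Finsupp.single u 1) g =
      wshuf K (R (Finsupp.single u 1)) (wappend K (Finsupp.single (u.drop a) 1) g) := by
  simp [lastShuf]

lemma wbdry_overlapShuf {a : ℕ} {z : WGrp K P}
    (hR : ∀ u : List P, u.Pairwise (· > ·) →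
      wbdry K (R (Finsupp.single u 1)) = R (wbdryList K u))
    (hRs : ∀ u : List P, u.Pairwise (· > ·) →
      wsign K (R (Finsupp.single u 1)) = (-1 : K) ^ u.length • R (Finsupp.single u 1))
    (hz : z ∈ Finsupp.supported K K {w : List P | a + 1 ≤ w.length ∧ w.Pairwise (· > ·)}) :
    wbdry K (overlapShuf R a z) =
      wsplit K a (headShuf R ∘ₗ wbdry K) z + (-1 : K) ^ a • (wsplit K a (wshuf K ∘ₗ R) z -
        wsplit K (a + 1) (wshuf K ∘ₗ R) z +
        wsplit K (a + 1) ((lastShuf R a).compl₂ (wbdry K)) z) := by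
  refine map_eq_of_supported (F := wbdry K ∘ₗ overlapShuf R a)
    (G := wsplit K a (headShuf R ∘ₗ wbdry K) + (-1 : K) ^ a • (wsplit K a (wshuf K ∘ₗ R) -
        wsplit K (a + 1) (wshuf K ∘ₗ R) +
        wsplit K (a + 1) ((lastShuf R a).compl₂ (wbdry K)))) (fun w hw => ?_) hz
  obtain ⟨u, x, v, rfl, rfl⟩ : ∃ u x v, w = u ++ x :: v ∧ u.length = a :=
    ⟨w.take a, w[a]'hw.1, w.drop (a + 1), by simp, by simpa using (Nat.lt_of_succ_le hw.1).le⟩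
  have ht : (u ++ x :: v).take (u.length + 1) = u ++ [x] := by simp [List.take_append]
  have hd : (u ++ x :: v).drop (u.length + 1) = v := by simp [List.drop_append]
  have hux : (u ++ [x]).Pairwise (· > ·) :=
    ht ▸ hw.2.sublist (List.take_sublist (u.length + 1) _)
  have hcons (g : WGrp K P) : wappend K (Finsupp.single [x] 1) g = wcons K x g := by
    simp [wappend, wcons]
  simp only [LinearMap.comp_apply, overlapShuf_single, wsplit_single, LinearMap.add_apply,
    LinearMap.smul_apply, LinearMap.sub_apply, LinearMap.compl₂_apply, ht, hd, List.take_left,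
    List.drop_left, wbdry_wshuf, hR _ hux, hRs _ hux, wbdry_single, headShuf_apply_single,
    lastShuf_single_apply, wbdryList_append, hcons, List.take_succ_cons, List.take_zero,
    wappend_single, List.append_nil, wbdryList, List.length_append, List.length_singleton,
    map_add, map_sub, map_smul, pow_succ, mul_neg, mul_one, neg_smul, smul_add, smul_sub,
    map_zero, sub_zero, map_neg, LinearMap.neg_apply]
  abel

end Homotopy

section Letters
variable {P : Type}

/-- The combinations of words with all letters in `J`. -/
abbrev lettersIn (J : Set P) : Submodule K (WGrp K P) :=
  Finsupp.supported K K {w : List P | ∀ y ∈ w, y ∈ J}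

variable {K}

lemma single_mem_lettersIn {J : Set P} {w : List P} (h : ∀ y ∈ w, y ∈ J) :
    Finsupp.single w 1 ∈ lettersIn K J :=
  Finsupp.single_mem_supported K 1 h

lemma lettersIn_mono {J J' : Set P} (h : J ⊆ J') : lettersIn K J ≤ lettersIn K J' :=
  Finsupp.supported_mono fun _ hw y hy => h (hw y hy)

lemma wcons_mem_lettersIn {J : Set P} {x : P} (hx : x ∈ J) {f : WGrp K P}
    (hf : f ∈ lettersIn K J) : wcons K x f ∈ lettersIn K J := by
  refine map_mem_of_supported (fun w hw => ?_) hf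
  rw [wcons_single]
  exact single_mem_lettersIn (by simpa [hx] using hw)

lemma wpi_mem_lettersIn {J : Set P} {f : WGrp K P} (hf : f ∈ lettersIn K J) :
    wpi K f ∈ lettersIn K J := by
  refine map_mem_of_supported (fun w hw => ?_) hf
  by_cases h : w.IsChain (· ≠ ·)
  · rw [wpi_single_of_isChain K h]
    exact single_mem_lettersIn hw
  · rw [wpi_single_of_not_isChain K h]
    exact Submodule.zero_mem _

lemma eq_zero_of_wcons_mem_lettersIn {J : Set P} {x : P} (hx : x ∉ J) {f : WGrp K P}
    (hf : wcons K x f ∈ lettersIn K J) : f = 0 := by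
  ext w
  have h : wcons K x f (x :: w) = 0 :=
    (Finsupp.mem_supported' K _).mp hf _ fun h => hx (h x (by simp))
  rwa [wcons, Finsupp.lmapDomain_apply,
    Finsupp.mapDomain_apply List.cons_injective] at h

lemma shufList_mem_lettersIn [SemilatticeSup P] {J : Set P} (hJ : SupClosed J) {u v : List P}
    (hu : ∀ y ∈ u, y ∈ J) (hv : ∀ y ∈ v, y ∈ J) : shufList K u v ∈ lettersIn K J := by
  induction u, v using shufList.induct with
  | case1 v => simpa [shufList] using single_mem_lettersIn hv
  | case2 x u => simpa [shufList] using single_mem_lettersIn hu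
  | case3 x u y v ih1 ih2 =>
    rw [shufList]
    simp only [List.forall_mem_cons] at hu hv ih1 ih2
    exact wcons_mem_lettersIn (hJ hu.1 hv.1)
      (Submodule.add_mem _ (ih1 hu.2 hv) (Submodule.smul_mem _ _ (ih2 hu hv.2)))

lemma wshuf_mem_lettersIn [SemilatticeSup P] {J : Set P} (hJ : SupClosed J) {f g : WGrp K P}
    (hf : f ∈ lettersIn K J) (hg : g ∈ lettersIn K J) : wshuf K f g ∈ lettersIn K J := by
  refine map_mem_of_supported (F := (wshuf K).flip g) (fun u hu => ?_) hf
  refine map_mem_of_supported (F := wshuf K (Finsupp.single u 1)) (fun v hv => ?_) hg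
  rw [wshuf_single]
  exact shufList_mem_lettersIn hJ hu hv

lemma wordC_mem_lettersIn_iff [Preorder P] {J : Set P} {n : ℕ} {f : CGrp K P n} :
    wordC K n f ∈ lettersIn K J ↔ f ∈ chainsIn K P J n := by
  refine ⟨fun h => (Finsupp.mem_supported' K _).mpr fun c hc => ?_, fun h => ?_⟩
  · have hw : wordC K n f (List.ofFn c.1) = 0 :=
      (Finsupp.mem_supported' K _).mp h _ fun h' => hc (by simpa using h')
    rwa [wordC, Finsupp.lmapDomain_apply, Finsupp.mapDomain_apply
      (f := fun c : OChain P n => List.ofFn c.1)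
      fun _ _ h => Subtype.ext (List.ofFn_injective h)] at hw
  · refine map_mem_of_supported (fun c hc => ?_) h
    rw [wordC_single]
    exact single_mem_lettersIn (by simpa using hc)

end Letters

section ChainMap
variable {P : Type} [Preorder P]

open Classical in
/-- The action on words of a family of endomorphisms of the chain groups. -/
def wordMap (ρ : (n : ℕ) → CGrp K P n →ₗ[K] CGrp K P n) : WGrp K P →ₗ[K] WGrp K P :=
  Finsupp.linearCombination K fun w =>
    if h : ∃ c : OChain P w.length, List.ofFn c.1 = w then
      wordC K w.length (ρ w.length (Finsupp.single h.choose 1)) else 0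

lemma wordMap_wordC (ρ : (n : ℕ) → CGrp K P n →ₗ[K] CGrp K P n) {n : ℕ} (f : CGrp K P n) :
    wordMap K ρ (wordC K n f) = wordC K n (ρ n f) := by
  have h : wordMap K ρ ∘ₗ wordC K n = wordC K n ∘ₗ ρ n := by
    ext1 c; ext1
    have key : ∀ w : List P, List.ofFn c.1 = w →
        wordMap K ρ (Finsupp.single w 1) = wordC K n (ρ n (Finsupp.single c 1)) := by
      intro w hw
      obtain rfl : w.length = n := by rw [← hw, List.length_ofFn]
      have hex : ∃ c : OChain P w.length, List.ofFn c.1 = w := ⟨c, hw⟩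
      have hc : hex.choose = c :=
        Subtype.ext (List.ofFn_injective (hex.choose_spec.trans hw.symm))
      rw [wordMap, Finsupp.linearCombination_single, one_smul, dif_pos hex, hc]
    simpa using key _ rfl
  exact LinearMap.congr_fun h f

variable {K}

lemma wbdry_wordC_eq_zero {n : ℕ} {f : CGrp K P n} (hf : f ∈ cyclesAt K P n) :
    wbdry K (wordC K n f) = 0 := by
  cases n with
  | zero =>
    have h : wbdry K ∘ₗ wordC K (P := P) 0 = 0 := by
      ext1 c; ext1
      simp [wbdryList]
    exact LinearMap.congr_fun h f
  | succ n => rw [← wordC_cbdry, LinearMap.mem_ker.mp hf, map_zero]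

lemma mem_cyclesAt_of_wordC_eq {n : ℕ} {f : CGrp K P n} {g : WGrp K P}
    (hf : wordC K n f = wpi K g) (hg : wbdry K g = 0) : f ∈ cyclesAt K P n := by
  cases n with
  | zero => exact Submodule.mem_top
  | succ n =>
    refine LinearMap.mem_ker.mpr (wordC_injective K n ?_)
    rw [map_zero, ← wpi_wordC, wordC_cbdry, hf, wpi_wbdry_wpi, hg, map_zero]

lemma wbdry_wordMap {ρ : (n : ℕ) → CGrp K P n →ₗ[K] CGrp K P n}
    (hρ : ∀ n, (ρ n).comp (cbdry K P n) = (cbdry K P n).comp (ρ (n + 1)))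
    {u : List P} (hu : u.Pairwise (· > ·)) :
    wbdry K (wordMap K ρ (Finsupp.single u 1)) = wordMap K ρ (wbdryList K u) := by
  obtain ⟨c, hc⟩ := exists_oChain_ofFn_eq rfl hu
  rw [← hc, ← wbdry_single, ← wordC_single, wordMap_wordC]
  generalize u.length = n at c
  cases n with
  | zero =>
    rw [wbdry_wordC_eq_zero Submodule.mem_top, wbdry_wordC_eq_zero Submodule.mem_top, map_zero]
  | succ n =>
    rw [← wordC_cbdry, ← wordC_cbdry, wordMap_wordC]
    exact congrArg (wordC K n) (LinearMap.congr_fun (hρ n) (Finsupp.single c 1)).symm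

lemma wsign_wordMap (ρ : (n : ℕ) → CGrp K P n →ₗ[K] CGrp K P n)
    {u : List P} (hu : u.Pairwise (· > ·)) :
    wsign K (wordMap K ρ (Finsupp.single u 1)) =
      (-1 : K) ^ u.length • wordMap K ρ (Finsupp.single u 1) := by
  obtain ⟨c, hc⟩ := exists_oChain_ofFn_eq rfl hu
  conv_lhs => rw [← hc, ← wordC_single, wordMap_wordC, wsign_wordC, ← wordMap_wordC,
    wordC_single, hc]

end ChainMap

section Graded
variable {P : Type} [PartialOrder P] {K} (σ : SynorComplex K P)

lemma synor_le_chainsIn (n : ℕ) (x : P) : σ.S n x ≤ chainsIn K P (Set.Iic x) (n + 1) :=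
  (σ.graded n x).trans <| Finsupp.supported_mono fun c hc r => by
    rw [Set.mem_Iic, ← show c.1 0 = x from hc]
    exact c.2.antitone (Fin.zero_le r)

lemma iSup_synor_le_chainsIn {J J' : Set P} (h : ∀ x ∈ J, Set.Iic x ⊆ J') (n : ℕ) :
    ⨆ x ∈ J, σ.S n x ≤ chainsIn K P J' (n + 1) :=
  iSup₂_le fun x hx => (synor_le_chainsIn σ n x).trans <|
    Finsupp.supported_mono fun _ hc r => h x hx (hc r)

lemma wordMap_mem_lettersIn {ρ : (n : ℕ) → CGrp K P n →ₗ[K] CGrp K P n}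
    (hρ : ∀ (n : ℕ) (c : OChain P (n + 1)),
      ρ (n + 1) (Finsupp.single c 1) ∈ ⨆ y ∈ Set.Iic (c.1 0), σ.S n y)
    {x : P} {u : List P} (hu : u.Pairwise (· > ·)) (hx : ∀ y ∈ u, y ≤ x) :
    wordMap K ρ (Finsupp.single u 1) ∈ lettersIn K (Set.Iic x) := by
  obtain ⟨n, hn⟩ : ∃ n, u.length = n := ⟨_, rfl⟩
  obtain ⟨c, rfl⟩ := exists_oChain_ofFn_eq hn hu
  rw [← wordC_single, wordMap_wordC, wordC_mem_lettersIn_iff]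
  clear hn
  cases n with
  | zero => exact (Finsupp.mem_supported' K _).mpr fun d hd => (hd fun r => r.elim0).elim
  | succ n =>
    refine iSup_synor_le_chainsIn σ (fun y hy => ?_) n (hρ n c)
    exact Set.Iic_subset_Iic.mpr (le_trans hy (hx _ (by simp)))

end Graded

section Representation
variable {P : Type}

/-- Deletion of the first letter of every word. -/
def wtail : WGrp K P →ₗ[K] WGrp K P := Finsupp.lmapDomain K K List.tail

@[simp] lemma wtail_single (w : List P) (a : K) :
    wtail K (Finsupp.single w a) = Finsupp.single w.tail a := by
  simp [wtail]

variable {K}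

lemma ofFn_odel_zero [Preorder P] {n : ℕ} (c : OChain P (n + 1)) :
    List.ofFn (odel P 0 c).1 = (List.ofFn c.1).tail := by
  rw [List.ofFn_succ, List.tail_cons]
  rfl

lemma ofFn_concatOC [PartialOrder P] {a b : ℕ} (χ : OChain P a) (c : OChain P b)
    (h : ∀ (s : Fin b) (r : Fin a), c.1 s < χ.1 r) :
    List.ofFn (concatOC P χ c h).1 = List.ofFn χ.1 ++ List.ofFn c.1 := by
  refine List.ext_getElem (by simp) fun i h₁ h₂ => ?_
  simp [concatOC, List.getElem_append]

lemma wsplit_wtail_prependC [PartialOrder P] {k b : ℕ} {χ : OChain P (k + 1)} {z : CGrp K P b}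
    (hz : z ∈ Finsupp.supported K K
      {c : OChain P b | ∀ (s : Fin b) (r : Fin (k + 1)), c.1 s < χ.1 r})
    (f : WGrp K P →ₗ[K] WGrp K P →ₗ[K] WGrp K P) :
    wsplit K k f (wtail K (wordC K (k + 1 + b) (prependC K P χ z))) =
      f (Finsupp.single (List.ofFn (odel P 0 χ).1) 1) (wordC K b z) := by
  refine map_eq_of_supported
    (F := wsplit K k f ∘ₗ wtail K ∘ₗ wordC K (k + 1 + b) ∘ₗ prependC K P χ)
    (G := f (Finsupp.single (List.ofFn (odel P 0 χ).1) 1) ∘ₗ wordC K b) (fun c hc => ?_) hz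
  have hp : prependC K P χ (Finsupp.single c 1) = Finsupp.single (concatOC P χ c hc) (1 : K) := by
    simp only [prependC, Finsupp.lsum_single]
    rw [dif_pos fun s r => hc s r, Finsupp.lsingle_apply]
  have hlen : (List.ofFn (odel P 0 χ).1).length = k := List.length_ofFn
  have hne : List.ofFn χ.1 ≠ [] := by simp
  simp only [LinearMap.comp_apply, hp, wordC_single, ofFn_concatOC, wtail_single,
    List.tail_append_of_ne_nil hne, ← ofFn_odel_zero, wsplit_single, List.take_left' hlen,
    List.drop_left' hlen]

lemma wsplit_wtail_of_representation [PartialOrder P] {k b m : ℕ} (h : k + 1 + b = m + 1)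
    {γ : CGrp K P (m + 1)} {X : Finset (OChain P (k + 1))} {Z : OChain P (k + 1) → CGrp K P b}
    (hZ : ∀ χ, Z χ ∈ Finsupp.supported K K
      {c : OChain P b | ∀ (s : Fin b) (r : Fin (k + 1)), c.1 s < χ.1 r})
    (hγ : γ = ∑ χ ∈ X, castCGrp K P h (prependC K P χ (Z χ)))
    (f : WGrp K P →ₗ[K] WGrp K P →ₗ[K] WGrp K P) :
    wsplit K k f (wtail K (wordC K (m + 1) γ)) =
      ∑ χ ∈ X, f (Finsupp.single (List.ofFn (odel P 0 χ).1) 1) (wordC K b (Z χ)) := by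
  conv_lhs => rw [hγ]
  simp only [map_sum, wordC_castCGrp, wsplit_wtail_prependC (hZ _)]

lemma wsplit_compl₂_wbdry_eq_zero [PartialOrder P] {k b m : ℕ} (h : k + 1 + b = m + 1)
    {γ : CGrp K P (m + 1)} {X : Finset (OChain P (k + 1))} {Z : OChain P (k + 1) → CGrp K P b}
    (hZ0 : ∀ χ, Z χ ∈ cyclesAt K P b)
    (hZ : ∀ χ, Z χ ∈ Finsupp.supported K K
      {c : OChain P b | ∀ (s : Fin b) (r : Fin (k + 1)), c.1 s < χ.1 r})
    (hγ : γ = ∑ χ ∈ X, castCGrp K P h (prependC K P χ (Z χ)))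
    (f : WGrp K P →ₗ[K] WGrp K P →ₗ[K] WGrp K P) :
    wsplit K k (f.compl₂ (wbdry K)) (wtail K (wordC K (m + 1) γ)) = 0 := by
  rw [wsplit_wtail_of_representation h hZ hγ]
  exact Finset.sum_eq_zero fun χ _ => by simp [wbdry_wordC_eq_zero (hZ0 χ)]

lemma wordC_shuffledRepresentation [SemilatticeSup P] {k b m : ℕ} (h : k + 1 + b = m + 1)
    {γ : CGrp K P (m + 1)} {X : Finset (OChain P (k + 1))} {Z : OChain P (k + 1) → CGrp K P b}
    (hZ : ∀ χ, Z χ ∈ Finsupp.supported K K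
      {c : OChain P b | ∀ (s : Fin b) (r : Fin (k + 1)), c.1 s < χ.1 r})
    (hγ : γ = ∑ χ ∈ X, castCGrp K P h (prependC K P χ (Z χ)))
    (ρ : (n : ℕ) → CGrp K P n →ₗ[K] CGrp K P n) (h' : k + b = m) :
    wordC K m (∑ χ ∈ X, piProj K P m (castMGrp K P h' (shufLin K P k b
      (iotaCM K P k (ρ k (Finsupp.single (odel P 0 χ) 1))) (iotaCM K P b (Z χ))))) =
      wpi K (wsplit K k (wshuf K ∘ₗ wordMap K ρ) (wtail K (wordC K (m + 1) γ))) := by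
  rw [wsplit_wtail_of_representation h hZ hγ, map_sum, map_sum]
  refine Finset.sum_congr rfl fun χ _ => ?_
  rw [wordC_piProj_shufLin, ← wordMap_wordC, wordC_single]
  rfl

end Representation

section Principal
variable {P : Type} [PartialOrder P] {K} {σ : SynorComplex K P} {m : ℕ} {t : P}
  {γ : CGrp K P (m + 1)}

/-- The words of the strictly decreasing chains with `m` elements below `t`. -/
def chainWords (m : ℕ) (t : P) : Set (List P) :=
  {w | w.length = m ∧ w.Pairwise (· > ·) ∧ ∀ y ∈ w, y < t}

lemma ofFn_tail_mem_chainWords {c : OChain P (m + 1)} (hc : c.1 0 = t) :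
    (List.ofFn c.1).tail ∈ chainWords m t := by
  have hp := pairwise_ofFn_oChain c
  refine ⟨by simp, hp.tail, ?_⟩
  rw [List.ofFn_succ, List.pairwise_cons, hc] at hp
  rw [List.ofFn_succ]
  exact hp.1

lemma wtail_mem_supported_chainWords (hγ : γ ∈ σ.S m t) :
    wtail K (wordC K (m + 1) γ) ∈ Finsupp.supported K K (chainWords m t) := by
  refine map_mem_of_supported (F := wtail K ∘ₗ wordC K (m + 1)) (fun c hc => ?_)
    (σ.graded m t hγ)
  rw [LinearMap.comp_apply, wordC_single, wtail_single]
  exact Finsupp.single_mem_supported K 1 (ofFn_tail_mem_chainWords hc)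

lemma wcons_wtail_of_principal (hγ : γ ∈ σ.S m t) :
    wcons K t (wtail K (wordC K (m + 1) γ)) = wordC K (m + 1) γ := by
  refine map_eq_of_supported (F := wcons K t ∘ₗ wtail K ∘ₗ wordC K (m + 1))
    (fun c hc => ?_) (σ.graded m t hγ)
  have hct : c.1 0 = t := hc
  simp [List.ofFn_succ, hct]

lemma wbdry_wtail_of_principal (hm : 0 < m) (hγ : γ ∈ σ.S m t) :
    wbdry K (wtail K (wordC K (m + 1) γ)) = 0 := by
  obtain ⟨m, rfl⟩ := Nat.exists_eq_succ_of_ne_zero hm.ne'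
  refine eq_zero_of_wcons_mem_lettersIn (J := Set.Iio t) (lt_irrefl t) ?_
  have h := wbdry_wcons K t (wtail K (wordC K (m + 1 + 1) γ))
  rw [wcons_wtail_of_principal hγ, ← wordC_cbdry, eq_sub_iff_add_eq', ← eq_sub_iff_add_eq] at h
  rw [h]
  refine Submodule.sub_mem _ (Finsupp.supported_mono (fun w hw => hw.2.2)
    (wtail_mem_supported_chainWords hγ)) (wordC_mem_lettersIn_iff.mpr ?_)
  exact iSup_synor_le_chainsIn σ (fun x hx => Set.Iic_subset_Iio.mpr hx) m (σ.strict m t γ hγ)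

end Principal

section Main
variable {P : Type} [SemilatticeSup P] {K} {σ : SynorComplex K P}
  {ρ : (n : ℕ) → CGrp K P n →ₗ[K] CGrp K P n} {m : ℕ} {t : P} {γ : CGrp K P (m + 1)}

lemma wshuf_wordMap_mem_lettersIn
    (hρ : ∀ (n : ℕ) (c : OChain P (n + 1)),
      ρ (n + 1) (Finsupp.single c 1) ∈ ⨆ y ∈ Set.Iic (c.1 0), σ.S n y)
    (hm : 0 < m) {w : List P} (hw : w ∈ chainWords m t) (i j : ℕ) :
    wshuf K (wordMap K ρ (Finsupp.single (w.take i) 1)) (Finsupp.single (w.drop j) 1) ∈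
      lettersIn K (Set.Iio t) := by
  obtain ⟨hlen, hp, ht⟩ := hw
  cases w with
  | nil => exact absurd hlen hm.ne
  | cons x w =>
    have hx : ∀ y ∈ x :: w, y ≤ x :=
      List.forall_mem_cons.mpr ⟨le_rfl, fun y hy => (List.rel_of_pairwise_cons hp hy).le⟩
    have hsup : SupClosed (Set.Iic x) := fun _ h₁ _ h₂ => sup_le h₁ h₂
    refine lettersIn_mono (Set.Iic_subset_Iio.mpr (ht x List.mem_cons_self))
      (wshuf_mem_lettersIn hsup ?_ ?_)
    · exact wordMap_mem_lettersIn σ hρ (hp.sublist (List.take_sublist i _))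
        fun y hy => hx y (List.mem_of_mem_take hy)
    · exact single_mem_lettersIn fun y hy => hx y (List.mem_of_mem_drop hy)

lemma exists_wordC_eq_overlapShuf {a b : ℕ} (hm : a + 1 + b = m) {z : WGrp K P}
    (hz : z ∈ Finsupp.supported K K (chainWords m t)) :
    ∃ W : CGrp K P (m + 1), wordC K (m + 1) W = wpi K (overlapShuf (wordMap K ρ) a z) := by
  refine map_mem_of_supported (F := wpi K ∘ₗ overlapShuf (wordMap K ρ) a)
    (p := LinearMap.range (wordC K (m + 1))) (fun w hw => ?_) hz
  obtain ⟨hlen, hp, -⟩ := hw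
  obtain ⟨c, hc⟩ := exists_oChain_ofFn_eq (n := a + 1) (w := w.take (a + 1))
    (by simp; omega) (hp.sublist (List.take_sublist _ _))
  obtain ⟨d, hd⟩ := exists_oChain_ofFn_eq (n := b + 1) (w := w.drop a)
    (by simp; omega) (hp.sublist (List.drop_sublist _ _))
  refine ⟨_, (wordC_piProj_shufLin K (show a + 1 + (b + 1) = m + 1 by omega)
    (ρ (a + 1) (Finsupp.single c 1)) (Finsupp.single d 1)).trans ?_⟩
  rw [← wordMap_wordC, wordC_single, wordC_single, hc, hd, LinearMap.comp_apply,
    overlapShuf_single]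

variable (ρ) in
/-- The chain obtained from a representation `γ = Σ χ * ζ_χ` by shuffling the image under `ρ`
of the chains `χ` without their largest element with the chains `ζ_χ`. -/
abbrev shuffledRepresentation {k b : ℕ} (h : k + b = m) (X : Set (OChain P (k + 1)))
    (Z : OChain P (k + 1) → CGrp K P b) : CGrp K P m :=
  ∑ᶠ χ ∈ X, piProj K P m (castMGrp K P h (shufLin K P k b
    (iotaCM K P k (ρ k (Finsupp.single (odel P 0 χ) 1))) (iotaCM K P b (Z χ))))

theorem shuffledRepresentation_homologous [Finite P]
    (hρ1 : ∀ n, (ρ n).comp (cbdry K P n) = (cbdry K P n).comp (ρ (n + 1)))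
    (hρ2 : ∀ (n : ℕ) (c : OChain P (n + 1)),
      ρ (n + 1) (Finsupp.single c 1) ∈ ⨆ y ∈ Set.Iic (c.1 0), σ.S n y)
    {a b : ℕ} (hA : a + 1 + b = m) (hB : a + (b + 1) = m) (hγ : γ ∈ σ.S m t)
    {XA : Set (OChain P (a + 1 + 1))} {ZA : OChain P (a + 1 + 1) → CGrp K P b}
    (hA0 : ∀ χ, ZA χ ∈ cyclesAt K P b)
    (hA1 : ∀ χ, ZA χ ∈ Finsupp.supported K K
      {c : OChain P b | ∀ (s : Fin b) (r : Fin (a + 1 + 1)), c.1 s < χ.1 r})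
    (hAm : a + 1 + 1 + b = m + 1)
    (hA3 : γ = ∑ᶠ χ ∈ XA, castCGrp K P hAm (prependC K P χ (ZA χ)))
    {XB : Set (OChain P (a + 1))} {ZB : OChain P (a + 1) → CGrp K P (b + 1)}
    (hB0 : ∀ χ, ZB χ ∈ cyclesAt K P (b + 1))
    (hB1 : ∀ χ, ZB χ ∈ Finsupp.supported K K
      {c : OChain P (b + 1) | ∀ (s : Fin (b + 1)) (r : Fin (a + 1)), c.1 s < χ.1 r})
    (hBm : a + 1 + (b + 1) = m + 1)
    (hB3 : γ = ∑ᶠ χ ∈ XB, castCGrp K P hBm (prependC K P χ (ZB χ))) :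
    shuffledRepresentation ρ hA XA ZA ∈ cyclesAt K P m ⊓ chainsIn K P (Set.Iio t) m ∧
    shuffledRepresentation ρ hB XB ZB ∈ cyclesAt K P m ⊓ chainsIn K P (Set.Iio t) m ∧
    shuffledRepresentation ρ hA XA ZA - shuffledRepresentation ρ hB XB ZB ∈
      Submodule.map (cbdry K P m) (chainsIn K P (Set.Iio t) (m + 1)) := by
  have hfin (n : ℕ) : Finite (OChain P n) := Subtype.finite
  have hm : 0 < m := by omega
  rw [finsum_mem_eq_finite_toFinset_sum _ (Set.toFinite XA)] at hA3
  rw [finsum_mem_eq_finite_toFinset_sum _ (Set.toFinite XB)] at hB3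
  simp only [shuffledRepresentation, finsum_mem_eq_finite_toFinset_sum _ (Set.toFinite XA),
    finsum_mem_eq_finite_toFinset_sum _ (Set.toFinite XB)]
  have hwA := wordC_shuffledRepresentation hAm hA1 hA3 ρ hA
  have hwB := wordC_shuffledRepresentation hBm hB1 hB3 ρ hB
  have hsA := wsplit_compl₂_wbdry_eq_zero hAm hA0 hA1 hA3
  have hsB := wsplit_compl₂_wbdry_eq_zero hBm hB0 hB1 hB3
  have hz := wtail_mem_supported_chainWords hγ
  have hz0 := wbdry_wtail_of_principal hm hγ
  set A : CGrp K P m := ∑ χ ∈ (Set.toFinite XA).toFinset, _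
  set B : CGrp K P m := ∑ χ ∈ (Set.toFinite XB).toFinset, _
  clear_value A B
  generalize wtail K (wordC K (m + 1) γ) = z at *
  have hlen {k : ℕ} (hk : k ≤ m) :
      z ∈ Finsupp.supported K K {w : List P | k ≤ w.length ∧ w.Pairwise (· > ·)} := by
    refine Finsupp.supported_mono (fun w hw => ?_) hz
    exact ⟨hk.trans hw.1.ge, hw.2.1⟩
  have hlen' {k : ℕ} (hk : k ≤ m) : z ∈ Finsupp.supported K K {w : List P | k ≤ w.length} :=
    Finsupp.supported_mono (fun w hw => hw.1) (hlen hk)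
  have hpA := wsplit_comp_wbdry_eq_zero (hlen' (k := a + 1) (by omega)) hz0 hsA
  have hpB := wsplit_comp_wbdry_eq_zero (hlen' (k := a) (by omega)) hz0 hsB
  have hR := fun (u : List P) hu => wbdry_wordMap hρ1 (u := u) hu
  have hRs := fun (u : List P) hu => wsign_wordMap ρ (u := u) hu
  have hin (k : ℕ) : wpi K (wsplit K k (wshuf K ∘ₗ wordMap K ρ) z) ∈ lettersIn K (Set.Iio t) :=
    wpi_mem_lettersIn <| map_mem_of_supported
      (fun w hw => by simpa using wshuf_wordMap_mem_lettersIn hρ2 hm hw k k) hz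
  refine ⟨⟨mem_cyclesAt_of_wordC_eq hwA ?_, wordC_mem_lettersIn_iff.mp (hwA ▸ hin _)⟩,
    ⟨mem_cyclesAt_of_wordC_eq hwB ?_, wordC_mem_lettersIn_iff.mp (hwB ▸ hin _)⟩, ?_⟩
  · rw [wbdry_wsplit_wshuf hR hRs (hlen (by omega)), hpA, hsA, smul_zero, add_zero]
  · rw [wbdry_wsplit_wshuf hR hRs (hlen (by omega)), hpB, hsB, smul_zero, add_zero]
  · obtain ⟨W, hW⟩ := exists_wordC_eq_overlapShuf (ρ := ρ) hA hz
    have hWin : W ∈ chainsIn K P (Set.Iio t) (m + 1) :=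
      wordC_mem_lettersIn_iff.mp <| hW ▸ wpi_mem_lettersIn (map_mem_of_supported
        (fun w hw => by simpa using wshuf_wordMap_mem_lettersIn hρ2 hm hw (a + 1) a) hz)
    refine ⟨(-1 : K) ^ (a + 1) • W, Submodule.smul_mem _ _ hWin, wordC_injective K m ?_⟩
    rw [map_smul, map_smul, ← wpi_wordC, wordC_cbdry, hW, wpi_wbdry_wpi,
      wbdry_overlapShuf hR hRs (hlen (by omega)), hpB, hsA, zero_add, add_zero, map_smul, smul_smul,
      map_sub, map_sub, hwA, hwB, ← pow_add, show a + 1 + a = 2 * a + 1 by ring, pow_succ, pow_mul]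
    simp

end Main

end Words

/-- Let `L` be a finite lattice with `0̂ ≠ 1̂`, `L̄ = L ∖ {0̂}`,
`Ľ = L ∖ {0̂, 1̂}`.  Fix a synor complex `S_*(L̄) ⊆ C̃_*(L̄)` and maps `ρ_k` satisfying
(R0)–(R2).  Let `γ = 1̂ * ζ ∈ S_m(L̄)^{(1̂)}` be a principal synor chain, `1 ≤ ℓ ≤ m`, and
let `γ = Σ_{χ ∈ X_ℓ^γ} χ * ζ_χ` and `γ = Σ_{χ′ ∈ X_{ℓ-1}^γ} χ′ * ζ_{χ′}` be its `ℓ`- and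
`(ℓ-1)`-representations.  Then the chains
`Σ_{χ ∈ X_ℓ^γ} π(ρ_{ℓ-1}(∂_ℓ^{(0)}(χ)) ⧢ ζ_χ)` and
`Σ_{χ′ ∈ X_{ℓ-1}^γ} π(ρ_{ℓ-2}(∂_{ℓ-1}^{(0)}(χ′)) ⧢ ζ_{χ′})`
are cycles supported in `Ľ`, and they are homologous in `H̃_{m-1}(Ľ)`. -/
theorem consecutive_shuffled_representations_homologous
    (L : Type) [Lattice L] [BoundedOrder L] [Fintype L] (hbt : (⊥ : L) ≠ ⊤)
    (σ : SynorComplex K (Punct L))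
    (ρ : (nn : ℕ) → CGrp K (Punct L) nn →ₗ[K] CGrp K (Punct L) nn)
    (hρ0 : ρ 0 = LinearMap.id)
    (hρS : ∀ (nn : ℕ) (f : CGrp K (Punct L) nn),
      ρ nn f ∈ idealPart K (Punct L) σ.S Set.univ nn)
    (hρ1 : ∀ nn : ℕ,
      (ρ nn).comp (cbdry K (Punct L) nn) = (cbdry K (Punct L) nn).comp (ρ (nn + 1)))
    (hρ2 : ∀ (nn : ℕ) (c : OChain (Punct L) (nn + 1)),
      ρ (nn + 1) (Finsupp.single c 1) ∈ ⨆ y ∈ Set.Iic (c.1 0), σ.S nn y)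
    (m ℓ : ℕ) (h1 : 1 ≤ ℓ) (h2 : ℓ ≤ m)
    (γ : CGrp K (Punct L) (m + 1))
    (hγ : γ ∈ σ.S m ⟨(⊤ : L), fun h => hbt h.symm⟩)
    -- the ℓ-representation of γ
    (ζA : OChain (Punct L) (ℓ + 1) → CGrp K (Punct L) (m - ℓ))
    (hA0 : ∀ χ : OChain (Punct L) (ℓ + 1),
      ζA χ ∈ cyclesAt K (Punct L) (m - ℓ) ⊓
        idealPart K (Punct L) σ.S (Set.Iio (χ.1 (Fin.last ℓ))) (m - ℓ))
    (hA1 : ∀ χ : OChain (Punct L) (ℓ + 1), ζA χ ∈ Finsupp.supported K K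
      {c : OChain (Punct L) (m - ℓ) |
        ∀ (s : Fin (m - ℓ)) (r : Fin (ℓ + 1)), c.1 s < χ.1 r})
    (hA2 : ∀ χ ∉ initSegs K (Punct L) γ (ℓ + 1) (by omega), ζA χ = 0)
    (hA3 : γ = ∑ᶠ χ ∈ initSegs K (Punct L) γ (ℓ + 1) (by omega),
      castCGrp K (Punct L) (by omega) (prependC K (Punct L) χ (ζA χ)))
    -- the (ℓ-1)-representation of γ
    (ζB : OChain (Punct L) ℓ → CGrp K (Punct L) (m - ℓ + 1))
    (hB0 : ∀ χ' : OChain (Punct L) ℓ,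
      ζB χ' ∈ cyclesAt K (Punct L) (m - ℓ + 1) ⊓
        idealPart K (Punct L) σ.S
          (Set.Iio (χ'.1 (Fin.last (ℓ - 1) |>.cast (by omega)))) (m - ℓ + 1))
    (hB1 : ∀ χ' : OChain (Punct L) ℓ, ζB χ' ∈ Finsupp.supported K K
      {c : OChain (Punct L) (m - ℓ + 1) |
        ∀ (s : Fin (m - ℓ + 1)) (r : Fin ℓ), c.1 s < χ'.1 r})
    (hB2 : ∀ χ' ∉ initSegs K (Punct L) γ ℓ (by omega), ζB χ' = 0)
    (hB3 : γ = ∑ᶠ χ' ∈ initSegs K (Punct L) γ ℓ (by omega),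
      castCGrp K (Punct L) (by omega) (prependC K (Punct L) χ' (ζB χ'))) :
    ((∑ᶠ χ ∈ initSegs K (Punct L) γ (ℓ + 1) (by omega),
        piProj K (Punct L) m (castMGrp K (Punct L) (show ℓ + (m - ℓ) = m by omega)
          (shufLin K (Punct L) ℓ (m - ℓ)
            (iotaCM K (Punct L) ℓ (ρ ℓ (Finsupp.single (odel (Punct L) 0 χ) 1)))
            (iotaCM K (Punct L) (m - ℓ) (ζA χ))))) ∈
      cyclesAt K (Punct L) m ⊓
        chainsIn K (Punct L) {y : Punct L | (y : L) ≠ ⊤} m) ∧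
    ((∑ᶠ χ' ∈ initSegs K (Punct L) γ ℓ (by omega),
        piProj K (Punct L) m (castMGrp K (Punct L) (show (ℓ - 1) + (m - ℓ + 1) = m by omega)
          (shufLin K (Punct L) (ℓ - 1) (m - ℓ + 1)
            (iotaCM K (Punct L) (ℓ - 1)
              (ρ (ℓ - 1) (Finsupp.single (odel (Punct L) 0 (castOC (show ℓ = (ℓ - 1) + 1 by omega) χ')) 1)))
            (iotaCM K (Punct L) (m - ℓ + 1) (ζB χ'))))) ∈
      cyclesAt K (Punct L) m ⊓
        chainsIn K (Punct L) {y : Punct L | (y : L) ≠ ⊤} m) ∧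
    ((∑ᶠ χ ∈ initSegs K (Punct L) γ (ℓ + 1) (by omega),
        piProj K (Punct L) m (castMGrp K (Punct L) (show ℓ + (m - ℓ) = m by omega)
          (shufLin K (Punct L) ℓ (m - ℓ)
            (iotaCM K (Punct L) ℓ (ρ ℓ (Finsupp.single (odel (Punct L) 0 χ) 1)))
            (iotaCM K (Punct L) (m - ℓ) (ζA χ))))) -
      (∑ᶠ χ' ∈ initSegs K (Punct L) γ ℓ (by omega),
        piProj K (Punct L) m (castMGrp K (Punct L) (show (ℓ - 1) + (m - ℓ + 1) = m by omega)
          (shufLin K (Punct L) (ℓ - 1) (m - ℓ + 1)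
            (iotaCM K (Punct L) (ℓ - 1)
              (ρ (ℓ - 1) (Finsupp.single (odel (Punct L) 0 (castOC (show ℓ = (ℓ - 1) + 1 by omega) χ')) 1)))
            (iotaCM K (Punct L) (m - ℓ + 1) (ζB χ'))))) ∈
      Submodule.map (cbdry K (Punct L) m)
        (chainsIn K (Punct L) {y : Punct L | (y : L) ≠ ⊤} (m + 1))) := by
  obtain ⟨a, rfl⟩ : ∃ a, ℓ = a + 1 := ⟨ℓ - 1, by omega⟩
  have hJ : {y : Punct L | (y : L) ≠ ⊤} = Set.Iio ⟨(⊤ : L), fun h => hbt h.symm⟩ :=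
    Set.ext fun y => lt_top_iff_ne_top.symm
  rw [hJ]
  exact Words.shuffledRepresentation_homologous hρ1 hρ2 (by omega) (by omega) hγ
    (fun χ => (hA0 χ).1) hA1 (by omega) hA3 (fun χ => (hB0 χ).1) hB1 (by omega) hB3

end
end

section
/- Let L be a finite lattice with minimum 0̂ and maximum 1̂, 0̂ ≠ 1̂; set L̄ = L∖{0̂} and Ľ = L∖{0̂,1̂}. Fix a synor complex S_*(L̄) ⊆ C̃_*(L̄) and maps ρ_k satisfying (R0)–(R2). Let γ = 1̂*ζ ∈ S_m(L̄)^{(1̂)} be a principal synor chain, let 1 ≤ ℓ ≤ m, and let γ = Σ_{χ∈X_ℓ^γ} χ*ζ_χ be its ℓ-representation. Then γ is homologous to Σ_{χ∈X_ℓ^γ} π(ρ_ℓ(χ) ⧢ ζ_χ) in the relative homology H̃_m(L̄, Ľ). -/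
open Finsupp

noncomputable section

variable (K : Type) [Field K]

section SymmetrizedJoin
variable {K}
variable {L : Type} [SemilatticeSup L]

/-- Expansion of a signed sum over permutations along the value at `0`. -/
lemma sum_perm_sign_comp_succ {M : Type*} [AddCommGroup M] [Module K M] {n : ℕ}
    (F : (Fin n → Fin (n + 1)) → M) :
    ∑ σ : Equiv.Perm (Fin (n + 1)), ((Equiv.Perm.sign σ : ℤ) : K) • F (σ ∘ Fin.succ) =
      ∑ k : Fin (n + 1), ((-1 : K) ^ (k : ℕ)) •
        ∑ σ : Equiv.Perm (Fin n), ((Equiv.Perm.sign σ : ℤ) : K) • F (k.succAbove ∘ σ) := by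
  rw [← Equiv.Perm.decomposeFin.symm.sum_comp, Fintype.sum_prod_type]
  refine Finset.sum_congr rfl fun k _ => ?_
  rw [Finset.smul_sum]
  induction k using Fin.cases with
  | zero =>
    refine Finset.sum_congr rfl fun σ _ => ?_
    have hF : (Equiv.Perm.decomposeFin.symm (0, σ) : Fin (n + 1) → Fin (n + 1)) ∘ Fin.succ
        = (0 : Fin (n + 1)).succAbove ∘ σ := by
      funext x; simp
    rw [hF]; simp
  | succ i =>
    rw [← Equiv.sum_comp (Equiv.mulLeft i.cycleRange⁻¹)]
    refine Finset.sum_congr rfl fun σ _ => ?_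
    have hF : (Equiv.Perm.decomposeFin.symm (i.succ, i.cycleRange⁻¹ * σ) :
        Fin (n + 1) → Fin (n + 1)) ∘ Fin.succ = i.succ.succAbove ∘ σ := by
      funext x
      have := Fin.succAbove_cycleRange i (i.cycleRange⁻¹ (σ x))
      have hinv : i.cycleRange (i.cycleRange⁻¹ (σ x)) = σ x := i.cycleRange.apply_symm_apply _
      rw [hinv] at this
      simp [this]
    rw [Equiv.coe_mulLeft, hF, smul_smul]
    simp [pow_succ]

lemma tauMul_le {n : ℕ} {a : Fin n → L} {r : Fin n} {x : L} (h : ∀ s, r ≤ s → a s ≤ x) :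
    (tauMul L a).1 r ≤ x :=
  Finset.sup'_le (Finset.nonempty_Ici) a fun s hs => h s (Finset.mem_Ici.mp hs)

lemma le_tauMul {n : ℕ} (a : Fin n → L) {r s : Fin n} (h : r ≤ s) :
    a s ≤ (tauMul L a).1 r :=
  Finset.le_sup' a (Finset.mem_Ici.mpr h)

/-- An antitone tuple as a multichain. -/
def MChain.mk {n : ℕ} (a : Fin n → L) (h : Antitone a) : MChain L n := ⟨a, h⟩

/-- A strictly antitone tuple as an order chain. -/
def OChain.mk {P : Type} [Preorder P] {n : ℕ} (a : Fin n → P) (h : StrictAnti a) :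
    OChain P n := ⟨a, h⟩

/-- The signed sum, over all permutations, of the multichains of suffix joins of a tuple. -/
def symJoin {n : ℕ} (a : Fin n → L) : MGrp K L n :=
  ∑ σ : Equiv.Perm (Fin n),
    ((Equiv.Perm.sign σ : ℤ) : K) • Finsupp.single (tauMul L (a ∘ σ)) 1

lemma mbdry_single {n : ℕ} (c : MChain L (n + 1)) :
    mbdry K L n (Finsupp.single c 1) =
      ∑ k : Fin (n + 1), ((-1 : K) ^ (k : ℕ)) • Finsupp.single (mdel L k c) 1 := by
  simp [mbdry]

lemma mdel_zero_tauMul {n : ℕ} (a : Fin (n + 1) → L) :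
    mdel L 0 (tauMul L a) = tauMul L (a ∘ Fin.succ) := by
  apply Subtype.ext
  funext r
  apply le_antisymm
  · refine tauMul_le fun s hs => ?_
    obtain ⟨t, rfl⟩ := Fin.exists_succ_eq.mpr
      (ne_of_gt (lt_of_lt_of_le (Fin.succ_pos r) (by simpa using hs)))
    exact le_tauMul (a ∘ Fin.succ) (by simpa using hs)
  · exact tauMul_le fun s hs => le_tauMul a (by simpa using hs)

lemma tauMul_comp_swap_le {n : ℕ} (a : Fin n → L) (i j r : Fin n) (hi : r ≤ i ↔ r ≤ j) :
    (tauMul L (a ∘ Equiv.swap i j)).1 r ≤ (tauMul L a).1 r := by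
  refine tauMul_le fun s hs => le_tauMul a ?_
  rw [Equiv.swap_apply_def]
  split_ifs with h1 h2
  · exact hi.mp (h1 ▸ hs)
  · exact hi.mpr (h2 ▸ hs)
  · exact hs

lemma mdel_succ_tauMul_swap {n : ℕ} (a : Fin (n + 1) → L) (j : Fin n) :
    mdel L j.succ (tauMul L (a ∘ Equiv.swap j.castSucc j.succ)) =
      mdel L j.succ (tauMul L a) := by
  apply Subtype.ext
  funext r
  have hr : j.succ.succAbove r ≤ j.castSucc ↔ j.succ.succAbove r ≤ j.succ := by
    have := Fin.succAbove_ne j.succ r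
    simp only [Fin.le_def, ne_eq, Fin.ext_iff, Fin.val_succ, Fin.val_castSucc] at *
    omega
  apply le_antisymm
  · exact tauMul_comp_swap_le a _ _ _ hr
  · have := tauMul_comp_swap_le (a ∘ Equiv.swap j.castSucc j.succ) _ _ _ hr
    rwa [Function.comp_assoc, ← Equiv.Perm.coe_mul, Equiv.swap_mul_self,
      Equiv.Perm.coe_one, Function.comp_id] at this

lemma mbdry_symJoin {n : ℕ} (a : Fin (n + 1) → L) :
    mbdry K L n (symJoin a) =
      ∑ k : Fin (n + 1), ((-1 : K) ^ (k : ℕ)) • symJoin (a ∘ k.succAbove) := by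
  simp only [symJoin, map_sum, map_smul, mbdry_single, Finset.smul_sum]
  rw [Finset.sum_comm, Fin.sum_univ_succ]
  have hcancel : ∀ j : Fin n, ∑ σ : Equiv.Perm (Fin (n + 1)), ((Equiv.Perm.sign σ : ℤ) : K) •
      ((-1 : K) ^ (j.succ : ℕ)) •
        (Finsupp.single (mdel L j.succ (tauMul L (a ∘ σ))) 1 : MGrp K L n) = 0 := by
    intro j
    have hne : j.castSucc ≠ j.succ := (Fin.castSucc_lt_succ).ne
    refine Finset.sum_involution (fun σ _ => σ * Equiv.swap j.castSucc j.succ)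
      (fun σ _ => ?_) (fun σ _ _ h => ?_) (fun _ _ => Finset.mem_univ _) (fun σ _ => ?_)
    · rw [Equiv.Perm.coe_mul, ← Function.comp_assoc, mdel_succ_tauMul_swap]
      simp [Equiv.Perm.sign_mul, Equiv.Perm.sign_swap hne]
    · exact hne (Equiv.swap_eq_one_iff.mp (mul_eq_left.mp h))
    · rw [mul_assoc, Equiv.swap_mul_self, mul_one]
  rw [Finset.sum_eq_zero (fun j _ => hcancel j), add_zero]
  have := sum_perm_sign_comp_succ (K := K)
    (fun f : Fin n → Fin (n + 1) => (Finsupp.single (tauMul L (a ∘ f)) 1 : MGrp K L n))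
  simpa [mdel_zero_tauMul, Function.comp_assoc, Finset.smul_sum] using this

lemma not_strictAnti_tauMul {n : ℕ} (b : Fin n → L) {p q : Fin n} (hpq : p < q)
    (hb : b p ≤ b q) : ¬ StrictAnti (tauMul L b).1 := by
  intro hs
  have hp1 : (p : ℕ) + 1 < n := by have := q.2; have := Fin.lt_def.mp hpq; omega
  refine absurd (hs (show p < ⟨p + 1, hp1⟩ from Fin.lt_def.mpr (Nat.lt_succ_self _)))
    (not_lt_of_ge ?_)
  refine tauMul_le fun s hs => ?_
  rcases hs.eq_or_lt with rfl | hlt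
  · exact hb.trans (le_tauMul b (Fin.le_def.mpr (Fin.lt_def.mp hpq)))
  · exact le_tauMul b (Fin.le_def.mpr (Fin.lt_def.mp hlt))

lemma tauMul_eq_of_antitone {n : ℕ} (b : Fin n → L) (hb : Antitone b) :
    tauMul L b = MChain.mk b hb := by
  apply Subtype.ext
  funext r
  exact le_antisymm (tauMul_le fun s hs => hb hs) (le_tauMul b le_rfl)

lemma piProj_single_of_strictAnti {n : ℕ} (c : MChain L n) (h : StrictAnti c.1) :
    piProj K L n (Finsupp.single c 1) = Finsupp.single (OChain.mk c.1 h) 1 := by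
  simp [piProj, h]
  rfl

lemma piProj_single_of_not_strictAnti {n : ℕ} (c : MChain L n) (h : ¬ StrictAnti c.1) :
    piProj K L n (Finsupp.single c 1) = 0 := by
  simp [piProj, h]

lemma cbdry_single {P : Type} [Preorder P] {n : ℕ} (c : OChain P (n + 1)) :
    cbdry K P n (Finsupp.single c 1) =
      ∑ k : Fin (n + 1), ((-1 : K) ^ (k : ℕ)) • Finsupp.single (odel P k c) 1 := by
  simp [cbdry]

lemma exists_eq_of_not_strictAnti {n : ℕ} (c : MChain L (n + 1)) (h : ¬ StrictAnti c.1) :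
    ∃ j : Fin n, c.1 j.castSucc = c.1 j.succ := by
  by_contra! hne
  refine h (Fin.strictAnti_iff_succ_lt.mpr fun j => ?_)
  exact lt_of_le_of_ne (c.2 Fin.castSucc_lt_succ.le) (hne j).symm

lemma piProj_mbdry_single_of_not_strictAnti {n : ℕ} (c : MChain L (n + 1))
    (h : ¬ StrictAnti c.1) : piProj K L n (mbdry K L n (Finsupp.single c 1)) = 0 := by
  obtain ⟨j, hj⟩ := exists_eq_of_not_strictAnti c h
  have hne : j.castSucc ≠ j.succ := (Fin.castSucc_lt_succ).ne
  rw [mbdry_single, map_sum, Fintype.sum_eq_add j.castSucc j.succ hne]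
  · have hdel : mdel L j.castSucc c = mdel L j.succ c := by
      apply Subtype.ext
      funext r
      change c.1 (j.castSucc.succAbove r) = c.1 (j.succ.succAbove r)
      rcases lt_trichotomy r j with hr | rfl | hr
      · rw [Fin.succAbove_of_castSucc_lt _ _ (by simpa using hr),
          Fin.succAbove_of_castSucc_lt _ _ (by
            simp only [Fin.lt_def, Fin.val_castSucc, Fin.val_succ] at *; omega)]
      · simp [hj]
      · rw [Fin.succAbove_of_le_castSucc _ _ (by simpa using hr.le),
          Fin.succAbove_of_le_castSucc _ _ (by
            simp only [Fin.lt_def, Fin.le_def, Fin.val_castSucc, Fin.val_succ] at *; omega)]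
    rw [hdel]
    simp [pow_succ]
  · rintro k ⟨hk1, hk2⟩
    rw [map_smul, piProj_single_of_not_strictAnti, smul_zero]
    intro hs
    obtain ⟨r, hr⟩ := Fin.exists_succAbove_eq hk1.symm
    obtain ⟨s, hs'⟩ := Fin.exists_succAbove_eq hk2.symm
    have hrs : r = s := hs.injective (by
      change c.1 (k.succAbove r) = c.1 (k.succAbove s)
      rw [hr, hs', hj])
    exact hne (by rw [← hr, ← hs', hrs])

lemma cbdry_piProj {n : ℕ} (f : MGrp K L (n + 1)) :
    cbdry K L n (piProj K L (n + 1) f) = piProj K L n (mbdry K L n f) := by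
  suffices h : (cbdry K L n).comp (piProj K L (n + 1)) = (piProj K L n).comp (mbdry K L n) from
    LinearMap.congr_fun h f
  refine Finsupp.lhom_ext' fun c => LinearMap.ext_ring ?_
  simp only [LinearMap.comp_apply, Finsupp.lsingle_apply]
  by_cases h : StrictAnti c.1
  · rw [piProj_single_of_strictAnti c h, cbdry_single, mbdry_single, map_sum]
    refine Finset.sum_congr rfl fun k _ => ?_
    rw [map_smul, piProj_single_of_strictAnti (mdel L k c)
      (h.comp_strictMono (Fin.strictMono_succAbove k))]
    rfl
  · rw [piProj_single_of_not_strictAnti c h, map_zero,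
      piProj_mbdry_single_of_not_strictAnti c h]

/-- The chain of `L` obtained from a tuple by symmetrizing its suffix joins. -/
def symChain {n : ℕ} (a : Fin n → L) : CGrp K L n := piProj K L n (symJoin a)

lemma cbdry_symChain {n : ℕ} (a : Fin (n + 1) → L) :
    cbdry K L n (symChain a) =
      ∑ k : Fin (n + 1), ((-1 : K) ^ (k : ℕ)) • symChain (a ∘ k.succAbove) := by
  simp [symChain, cbdry_piProj, mbdry_symJoin]

lemma perm_exists_inversion {n : ℕ} {σ : Equiv.Perm (Fin n)} (h : σ ≠ 1) :
    ∃ p q, p < q ∧ σ q < σ p := by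
  by_contra! hmono
  have hs : StrictMono σ := fun p q hpq => lt_of_le_of_ne (hmono p q hpq)
    (fun he => hpq.ne (σ.injective he))
  refine h (Equiv.ext fun x => ?_)
  exact congrArg (fun e : Fin n ≃o Fin n => e x)
    (Subsingleton.elim (StrictMono.orderIsoOfSurjective σ hs σ.surjective) (OrderIso.refl _))

lemma symChain_of_strictAnti (K : Type) [Field K] {n : ℕ} (a : Fin n → L) (ha : StrictAnti a) :
    symChain (K := K) a = Finsupp.single (OChain.mk a ha) 1 := by
  rw [symChain, symJoin, map_sum, Fintype.sum_eq_single (1 : Equiv.Perm (Fin n))]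
  · have : tauMul L (a ∘ (1 : Equiv.Perm (Fin n))) = MChain.mk a ha.antitone :=
      tauMul_eq_of_antitone a ha.antitone
    rw [this, map_smul, piProj_single_of_strictAnti (MChain.mk a ha.antitone) ha]
    simp
    rfl
  · intro σ hσ
    obtain ⟨p, q, hpq, hlt⟩ := perm_exists_inversion hσ
    rw [map_smul, piProj_single_of_not_strictAnti _
      (not_strictAnti_tauMul _ hpq (ha hlt).le), smul_zero]

lemma symChain_mem_chainsIn {n : ℕ} (a : Fin n → L) (x : L) (ha : ∀ r, a r ≤ x) :
    symChain (K := K) a ∈ chainsIn K L (Set.Iic x) n := by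
  rw [symChain, symJoin, map_sum]
  refine Submodule.sum_mem _ fun σ _ => ?_
  rw [map_smul]
  refine Submodule.smul_mem _ _ ?_
  by_cases h : StrictAnti (tauMul L (a ∘ σ)).1
  · rw [piProj_single_of_strictAnti _ h]
    exact Finsupp.single_mem_supported K _ fun r => tauMul_le fun s _ => ha _
  · rw [piProj_single_of_not_strictAnti _ h]
    exact Submodule.zero_mem _

end SymmetrizedJoin

section ChainProduct
variable {K}
variable {L : Type} [SemilatticeSup L]

/-- The projection to order chains of the shuffle product of two chains. -/
def joinProd {a b n : ℕ} (h : a + b = n) :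
    CGrp K L a →ₗ[K] CGrp K L b →ₗ[K] CGrp K L n :=
  Finsupp.lsum K fun c => LinearMap.toSpanSingleton K _
    (Finsupp.lsum K fun c' => LinearMap.toSpanSingleton K _ (symChain (concatT L h c.1 c'.1)))

lemma joinProd_single {a b n : ℕ} (h : a + b = n) (c : OChain L a) (c' : OChain L b) :
    joinProd (K := K) h (Finsupp.single c 1) (Finsupp.single c' 1) =
      symChain (concatT L h c.1 c'.1) := by
  simp [joinProd]

/-- Projected shuffle products may be summed over all permutations, since permutations that are
not shuffles contribute degenerate multichains. -/
lemma piProj_shufPair {p q : ℕ} (c : MChain L p) (c' : MChain L q) :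
    piProj K L (p + q) (shufPair K L c c') = symChain (concatT L rfl c.1 c'.1) := by
  classical
  rw [shufPair, symChain, symJoin, map_sum, map_sum]
  refine Finset.sum_congr rfl fun σ _ => ?_
  split_ifs with hσ
  · rfl
  · rw [map_zero, map_smul, piProj_single_of_not_strictAnti, smul_zero]
    rw [IsShuffleBlocks, not_and_or] at hσ
    push Not at hσ
    rcases hσ with ⟨r, s, hrs, hr, hs, hle⟩ | ⟨r, s, hrs, hr, hs, hle⟩
    · refine not_strictAnti_tauMul _ hrs ?_
      simp only [Function.comp_apply, concatT, dif_pos hr, dif_pos hs]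
      exact c.2 (Fin.le_def.mpr (Fin.le_def.mp hle))
    · refine not_strictAnti_tauMul _ hrs ?_
      simp only [Function.comp_apply, concatT, dif_neg (not_lt.mpr hr), dif_neg (not_lt.mpr hs)]
      refine c'.2 (Fin.le_def.mpr ?_)
      have := Fin.le_def.mp hle
      simp only
      omega

lemma piProj_shufLin {a b n : ℕ} (h : a + b = n) (u : CGrp K L a) (v : CGrp K L b) :
    piProj K L n (castMGrp K L h (shufLin K L a b (iotaCM K L a u) (iotaCM K L b v))) =
      joinProd h u v := by
  subst h
  have hcast : ∀ f : MGrp K L (a + b), castMGrp K L rfl f = f := fun f => by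
    simp only [castMGrp, Finsupp.domLCongr_apply]
    ext c
    simp
  rw [hcast]
  suffices hlin : ((shufLin K L a b).compl₁₂ (iotaCM K L a) (iotaCM K L b)).compr₂
      (piProj K L (a + b)) = joinProd rfl from
    LinearMap.congr_fun (LinearMap.congr_fun hlin u) v
  refine Finsupp.lhom_ext' fun c => LinearMap.ext_ring (Finsupp.lhom_ext' fun c' =>
    LinearMap.ext_ring ?_)
  change piProj K L (a + b) (shufLin K L a b (iotaCM K L a (Finsupp.single c 1))
    (iotaCM K L b (Finsupp.single c' 1))) = joinProd rfl (Finsupp.single c 1)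
      (Finsupp.single c' 1)
  have hiota : ∀ (n : ℕ) (d : OChain L n), iotaCM K L n (Finsupp.single d 1) =
      Finsupp.single (MChain.mk d.1 d.2.antitone) 1 := fun n d => by
    exact Finsupp.mapDomain_single
  rw [hiota, hiota, joinProd_single]
  simp only [shufLin, Finsupp.lsum_single, LinearMap.toSpanSingleton_apply, one_smul]
  exact piProj_shufPair _ _

lemma eq_of_mem_supported {α : Type} {M : Type*} [AddCommGroup M] [Module K M] {s : Set α}
    {f g : (α →₀ K) →ₗ[K] M} (h : ∀ a ∈ s, f (Finsupp.single a 1) = g (Finsupp.single a 1))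
    {v : α →₀ K} (hv : v ∈ Finsupp.supported K K s) : f v = g v := by
  rw [Finsupp.supported_eq_span_single] at hv
  exact LinearMap.eqOn_span (by rintro _ ⟨a, ha, rfl⟩; exact h a ha) hv

/-- A linear map carries a supported subspace into `N` when it does so on basis vectors. -/
lemma map_mem_of_mem_supported {α : Type} {M : Type*} [AddCommGroup M] [Module K M] {s : Set α}
    (f : (α →₀ K) →ₗ[K] M) {N : Submodule K M} (h : ∀ a ∈ s, f (Finsupp.single a 1) ∈ N)
    {v : α →₀ K} (hv : v ∈ Finsupp.supported K K s) : f v ∈ N := by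
  rw [Finsupp.supported_eq_span_single] at hv
  exact (Submodule.span_le (p := N.comap f)).mpr
    (by rintro _ ⟨a, ha, rfl⟩; exact h a ha) hv

lemma strictAnti_concatT {a b n : ℕ} (h : a + b = n) (χ : OChain L a) (c : OChain L b)
    (hc : ∀ s r, c.1 s < χ.1 r) : StrictAnti (concatT L h χ.1 c.1) := by
  subst h
  exact (concatOC L χ c hc).2

lemma joinProd_single_of_lt {a b n : ℕ} (h : a + b = n) (χ : OChain L a) (c : OChain L b)
    (hc : ∀ s r, c.1 s < χ.1 r) :
    joinProd (K := K) h (Finsupp.single χ 1) (Finsupp.single c 1) =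
      Finsupp.single (OChain.mk (concatT L h χ.1 c.1) (strictAnti_concatT h χ c hc)) 1 := by
  rw [joinProd_single, symChain_of_strictAnti]

lemma castCGrp_prependC {a b n : ℕ} (h : a + b = n) (χ : OChain L a) {ζ : CGrp K L b}
    (hζ : ζ ∈ Finsupp.supported K K {c : OChain L b | ∀ s r, c.1 s < χ.1 r}) :
    castCGrp K L h (prependC K L χ ζ) = joinProd h (Finsupp.single χ 1) ζ := by
  subst h
  have hcast : ∀ f : CGrp K L (a + b), castCGrp K L rfl f = f := fun f => by
    simp only [castCGrp, Finsupp.domLCongr_apply]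
    ext c
    simp
  rw [hcast]
  refine eq_of_mem_supported (f := prependC K L χ) (fun c hc => ?_) hζ
  rw [joinProd_single_of_lt rfl χ c hc]
  simp only [prependC, Finsupp.lsum_single]
  exact congrArg (fun f : K →ₗ[K] CGrp K L (a + b) => f 1) (dif_pos hc)

lemma joinProd_mem_chainsIn {a b n : ℕ} (h : a + b = n) {x : L} {u : CGrp K L a}
    {v : CGrp K L b} (hu : u ∈ chainsIn K L (Set.Iic x) a)
    (hv : v ∈ chainsIn K L (Set.Iic x) b) :
    joinProd h u v ∈ chainsIn K L (Set.Iic x) n := by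
  refine map_mem_of_mem_supported ((joinProd h).flip v) (fun c hc => ?_) hu
  refine map_mem_of_mem_supported (joinProd h (Finsupp.single c 1)) (fun c' hc' => ?_) hv
  rw [joinProd_single]
  refine symChain_mem_chainsIn _ _ fun r => ?_
  unfold concatT
  split_ifs
  · exact hc _
  · exact hc' _

lemma sum_fin_add_eq {M : Type*} [AddCommMonoid M] {a b n : ℕ} (h : a + b = n) (f : Fin n → M) :
    ∑ k, f k = ∑ i : Fin a, f ⟨i, by omega⟩ + ∑ j : Fin b, f ⟨a + j, by omega⟩ := by
  subst h
  exact Fin.sum_univ_add f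

lemma val_succAbove {n : ℕ} (k : Fin (n + 1)) (r : Fin n) :
    (k.succAbove r : ℕ) = if (r : ℕ) < k then (r : ℕ) else r + 1 := by
  simp only [Fin.succAbove, Fin.lt_def, Fin.val_castSucc]
  split_ifs <;> simp

lemma concatT_of_lt {X : Type} {a b n : ℕ} (h : a + b = n) (u : Fin a → X) (v : Fin b → X)
    {r : Fin n}
    (hr : (r : ℕ) < a) : concatT X h u v r = u ⟨r, hr⟩ :=
  dif_pos hr

lemma concatT_of_le {X : Type} {a b n : ℕ} (h : a + b = n) (u : Fin a → X) (v : Fin b → X)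
    {r : Fin n}
    (hr : a ≤ (r : ℕ)) : concatT X h u v r = v ⟨r - a, by omega⟩ :=
  dif_neg (not_lt.mpr hr)

lemma concatT_comp_succAbove_left {X : Type} {p q n : ℕ} (h : p + 1 + q = n + 1) (h' : p + q = n)
    (u : Fin (p + 1) → X) (v : Fin q → X) (i : Fin (p + 1)) :
    concatT X h u v ∘ Fin.succAbove ⟨i, by omega⟩ = concatT X h' (u ∘ i.succAbove) v := by
  funext r
  have hr := val_succAbove (⟨i, by omega⟩ : Fin (n + 1)) r
  have := i.2
  rw [Function.comp_apply]
  by_cases hrp : (r : ℕ) < p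
  · rw [concatT_of_lt _ _ _ (by rw [hr]; simp only; split_ifs <;> omega), concatT_of_lt _ _ _ hrp]
    refine congrArg u (Fin.ext ?_)
    exact hr.trans (val_succAbove i ⟨r, hrp⟩).symm
  · rw [concatT_of_le _ _ _ (by rw [hr]; simp only; split_ifs <;> omega),
      concatT_of_le _ _ _ (not_lt.mp hrp)]
    refine congrArg v (Fin.ext ?_)
    simp only [hr]
    split_ifs <;> omega

lemma concatT_comp_succAbove_right {X : Type} {p q n : ℕ} (h : p + (q + 1) = n + 1) (h' : p + q = n)
    (u : Fin p → X) (v : Fin (q + 1) → X) (j : Fin (q + 1)) :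
    concatT X h u v ∘ Fin.succAbove ⟨p + j, by omega⟩ = concatT X h' u (v ∘ j.succAbove) := by
  funext r
  have hr := val_succAbove (⟨p + j, by omega⟩ : Fin (n + 1)) r
  rw [Function.comp_apply]
  by_cases hrp : (r : ℕ) < p
  · rw [concatT_of_lt _ _ _ (by rw [hr]; simp only; split_ifs <;> omega), concatT_of_lt _ _ _ hrp]
    refine congrArg u (Fin.ext ?_)
    simp only [hr]
    split_ifs <;> omega
  · rw [concatT_of_le _ _ _ (by rw [hr]; simp only; split_ifs <;> omega),
      concatT_of_le _ _ _ (not_lt.mp hrp)]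
    refine congrArg v (Fin.ext ?_)
    have hj := val_succAbove j ⟨r - p, by omega⟩
    simp only [hr, hj]
    split_ifs <;> omega

/-- Leibniz rule for the product with a cycle. -/
lemma cbdry_joinProd {p q n : ℕ} (h : p + 1 + q = n + 1) (h' : p + q = n)
    (u : CGrp K L (p + 1)) {ζ : CGrp K L q} (hζ : ζ ∈ cyclesAt K L q) :
    cbdry K L n (joinProd h u ζ) = joinProd h' (cbdry K L p u) ζ := by
  suffices hlin : (cbdry K L n).comp ((joinProd h).flip ζ) =
      ((joinProd h').flip ζ).comp (cbdry K L p) from LinearMap.congr_fun hlin u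
  refine Finsupp.lhom_ext' fun c => LinearMap.ext_ring ?_
  change cbdry K L n (joinProd h (Finsupp.single c 1) ζ) =
    joinProd h' (cbdry K L p (Finsupp.single c 1)) ζ
  have hsplit : ∀ c' : OChain L q, cbdry K L n (joinProd h (Finsupp.single c 1)
      (Finsupp.single c' 1)) = joinProd h' (cbdry K L p (Finsupp.single c 1))
        (Finsupp.single c' 1) + ∑ j : Fin q, ((-1 : K) ^ (p + 1 + j : ℕ)) •
          symChain (concatT L h c.1 c'.1 ∘ Fin.succAbove ⟨p + 1 + j, by omega⟩) := by
    intro c'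
    rw [joinProd_single, cbdry_symChain, sum_fin_add_eq h, cbdry_single, map_sum,
      LinearMap.sum_apply]
    congr 1
    refine Finset.sum_congr rfl fun i _ => ?_
    rw [concatT_comp_succAbove_left h h', map_smul, LinearMap.smul_apply, joinProd_single]
    rfl
  cases q with
  | zero =>
    refine LinearMap.congr_fun (f := (cbdry K L n).comp (joinProd h (Finsupp.single c 1)))
      (Finsupp.lhom_ext' fun c' => LinearMap.ext_ring ?_) ζ
    simpa using hsplit c'
  | succ q =>
    have hlin : (cbdry K L n).comp (joinProd h (Finsupp.single c 1)) =
        joinProd h' (cbdry K L p (Finsupp.single c 1)) + ((-1 : K) ^ (p + 1)) •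
          (joinProd (show p + 1 + q = n by omega) (Finsupp.single c 1)).comp
            (cbdry K L q) := by
      refine Finsupp.lhom_ext' fun c' => LinearMap.ext_ring ?_
      refine (hsplit c').trans (congrArg _ ?_)
      change _ = ((-1 : K) ^ (p + 1)) • joinProd _ (Finsupp.single c 1)
        (cbdry K L q (Finsupp.single c' 1))
      rw [cbdry_single, map_sum, Finset.smul_sum]
      refine Finset.sum_congr rfl fun j _ => ?_
      rw [concatT_comp_succAbove_right h (by omega), map_smul, joinProd_single, smul_smul,
        ← pow_add]
      rfl
    have hz : cbdry K L q ζ = 0 := hζ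
    simpa [hz] using LinearMap.congr_fun hlin ζ

end ChainProduct

section Homotopy
variable {K}

lemma sum_succAbove_succAbove_eq_zero {P M : Type*} [AddCommGroup M] [Module K M] {n : ℕ}
    (g : (Fin n → P) → M) (a : Fin (n + 2) → P) :
    ∑ k : Fin (n + 2), ((-1 : K) ^ (k : ℕ)) • ∑ j : Fin (n + 1), ((-1 : K) ^ (j : ℕ)) •
      g ((a ∘ k.succAbove) ∘ j.succAbove) = 0 := by
  induction n with
  | zero =>
    have hg : ∀ f f' : Fin 0 → P, g f = g f' := fun f f' => by rw [Subsingleton.elim f f']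
    simp [Fin.sum_univ_succ, hg _ Fin.elim0]
  | succ n ih =>
    have hzero : (a ∘ (0 : Fin (n + 3)).succAbove) = a ∘ Fin.succ := by
      funext x; simp
    have hleft : ∀ k : Fin (n + 2),
        (a ∘ k.succ.succAbove) ∘ (0 : Fin (n + 2)).succAbove = (a ∘ Fin.succ) ∘ k.succAbove := by
      intro k; funext x; simp [Fin.succ_succAbove_succ]
    have hcons : ∀ (k : Fin (n + 2)) (j : Fin (n + 1)),
        (a ∘ k.succ.succAbove) ∘ j.succ.succAbove =
          Fin.cons (a 0) (((a ∘ Fin.succ) ∘ k.succAbove) ∘ j.succAbove) := by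
      intro k j
      funext x
      induction x using Fin.cases <;> simp [Fin.succ_succAbove_succ]
    have hinner : ∀ k : Fin (n + 2), ∑ j : Fin (n + 2), ((-1 : K) ^ (j : ℕ)) •
        g ((a ∘ k.succ.succAbove) ∘ j.succAbove) = g ((a ∘ Fin.succ) ∘ k.succAbove) -
          ∑ j : Fin (n + 1), ((-1 : K) ^ (j : ℕ)) •
            g (Fin.cons (a 0) (((a ∘ Fin.succ) ∘ k.succAbove) ∘ j.succAbove)) := by
      intro k
      rw [Fin.sum_univ_succ, hleft]
      simp [hcons, pow_succ, sub_eq_add_neg]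
    rw [Fin.sum_univ_succ, hzero]
    simp only [hinner, smul_sub, Finset.sum_sub_distrib]
    simp only [Fin.val_succ, pow_succ, mul_neg, mul_one, neg_smul, Finset.sum_neg_distrib]
    rw [ih (fun f => g (Fin.cons (a 0) f)) (a ∘ Fin.succ)]
    simp

open Classical in
lemma cbdry_cbdry {P : Type} [Preorder P] {n : ℕ} (u : CGrp K P (n + 2)) :
    cbdry K P n (cbdry K P (n + 1) u) = 0 := by
  refine LinearMap.congr_fun (f := (cbdry K P n).comp (cbdry K P (n + 1))) (g := 0)
    (Finsupp.lhom_ext' fun c => LinearMap.ext_ring ?_) u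
  change cbdry K P n (cbdry K P (n + 1) (Finsupp.single c 1)) = 0
  simp only [cbdry_single, map_sum, map_smul]
  rw [← sum_succAbove_succAbove_eq_zero (K := K) (fun f : Fin n → P =>
    if h : StrictAnti f then (Finsupp.single (OChain.mk f h) 1 : CGrp K P n) else 0) c.1]
  refine Finset.sum_congr rfl fun k _ => congrArg _ (Finset.sum_congr rfl fun j _ => ?_)
  have hanti : StrictAnti ((c.1 ∘ k.succAbove) ∘ j.succAbove) := (odel P j (odel P k c)).2
  rw [dif_pos hanti]
  rfl

variable {L : Type} [SemilatticeSup L]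

lemma joinProd_empty {q : ℕ} (h : 0 + q = q) (e : OChain L 0) (f : CGrp K L q) :
    joinProd h (Finsupp.single e 1) f = f := by
  refine LinearMap.congr_fun (g := LinearMap.id)
    (Finsupp.lhom_ext' fun c => LinearMap.ext_ring ?_) f
  change joinProd h (Finsupp.single e 1) (Finsupp.single c 1) = Finsupp.single c 1
  rw [joinProd_single_of_lt h e c fun _ r => r.elim0]
  refine congrArg (fun d => Finsupp.single d (1 : K)) (Subtype.ext ?_)
  funext r
  exact concatT_of_le h e.1 c.1 (Nat.zero_le _)

/-- The one-element chain `(x)`. -/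
def pointChain (x : L) : OChain L 1 := OChain.mk (fun _ => x) (Subsingleton.strictAnti _)

/-- The cone over a cycle bounds it. -/
lemma cbdry_cone {n : ℕ} (h : 1 + (n + 1) = n + 2) (x : L) {f : CGrp K L (n + 1)}
    (hf : cbdry K L n f = 0) :
    cbdry K L (n + 1) (joinProd h (Finsupp.single (pointChain x) 1) f) = f := by
  rw [cbdry_joinProd (p := 0) h (zero_add _) _ (show f ∈ cyclesAt K L (n + 1) from hf),
    cbdry_single]
  simp [joinProd_empty]

/-- A chain homotopy from `ρ` to the identity, built by coning off along the largest element. -/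
def coneHomotopy (ρ : (n : ℕ) → CGrp K L n →ₗ[K] CGrp K L n) :
    (n : ℕ) → CGrp K L n →ₗ[K] CGrp K L (n + 1)
  | 0 => 0
  | n + 1 => Finsupp.lsum K fun c => LinearMap.toSpanSingleton K _
      (joinProd (show 1 + (n + 1) = n + 2 by omega) (Finsupp.single (pointChain (c.1 0)) 1)
        (Finsupp.single c 1 - ρ (n + 1) (Finsupp.single c 1) -
          coneHomotopy ρ n (cbdry K L n (Finsupp.single c 1))))

lemma coneHomotopy_single (ρ : (n : ℕ) → CGrp K L n →ₗ[K] CGrp K L n) {n : ℕ}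
    (c : OChain L (n + 1)) :
    coneHomotopy ρ (n + 1) (Finsupp.single c 1) =
      joinProd (show 1 + (n + 1) = n + 2 by omega) (Finsupp.single (pointChain (c.1 0)) 1)
        (Finsupp.single c 1 - ρ (n + 1) (Finsupp.single c 1) -
          coneHomotopy ρ n (cbdry K L n (Finsupp.single c 1))) := by
  simp [coneHomotopy]

lemma chainsIn_mono {P : Type} [Preorder P] {I J : Set P} (h : I ⊆ J) (n : ℕ) :
    chainsIn K P I n ≤ chainsIn K P J n :=
  Finsupp.supported_mono fun _ hc r => h (hc r)

lemma coneHomotopy_mem_chainsIn {ρ : (n : ℕ) → CGrp K L n →ₗ[K] CGrp K L n}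
    (hρ : ∀ (n : ℕ) (c : OChain L (n + 1)),
      ρ (n + 1) (Finsupp.single c 1) ∈ chainsIn K L (Set.Iic (c.1 0)) (n + 1))
    (n : ℕ) (c : OChain L (n + 1)) :
    coneHomotopy ρ (n + 1) (Finsupp.single c 1) ∈ chainsIn K L (Set.Iic (c.1 0)) (n + 2) := by
  induction n with
  | zero =>
    rw [coneHomotopy_single]
    refine joinProd_mem_chainsIn _ (Finsupp.single_mem_supported K _ fun _ => le_rfl)
      (Submodule.sub_mem _ (Submodule.sub_mem _ ?_ (hρ 0 c)) (Submodule.zero_mem _))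
    exact Finsupp.single_mem_supported K _ fun r => c.2.antitone (Fin.zero_le r)
  | succ n ih =>
    rw [coneHomotopy_single]
    refine joinProd_mem_chainsIn _ (Finsupp.single_mem_supported K _ fun _ => le_rfl)
      (Submodule.sub_mem _ (Submodule.sub_mem _ ?_ (hρ _ c)) ?_)
    · exact Finsupp.single_mem_supported K _ fun r => c.2.antitone (Fin.zero_le r)
    · rw [cbdry_single, map_sum]
      refine Submodule.sum_mem _ fun k _ => ?_
      rw [map_smul]
      refine Submodule.smul_mem _ _ (chainsIn_mono (Set.Iic_subset_Iic.mpr ?_) _ (ih _))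
      exact c.2.antitone (Fin.zero_le _)

lemma coneHomotopy_spec {ρ : (n : ℕ) → CGrp K L n →ₗ[K] CGrp K L n} (hρ0 : ρ 0 = LinearMap.id)
    (hρ1 : ∀ n : ℕ, (ρ n).comp (cbdry K L n) = (cbdry K L n).comp (ρ (n + 1)))
    (n : ℕ) (u : CGrp K L (n + 1)) :
    cbdry K L (n + 1) (coneHomotopy ρ (n + 1) u) + coneHomotopy ρ n (cbdry K L n u) =
      u - ρ (n + 1) u := by
  suffices hlin : (cbdry K L (n + 1)).comp (coneHomotopy ρ (n + 1)) +
      (coneHomotopy ρ n).comp (cbdry K L n) = LinearMap.id - ρ (n + 1) from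
    LinearMap.congr_fun hlin u
  have hcomm : ∀ (k : ℕ) (v : CGrp K L (k + 1)),
      ρ k (cbdry K L k v) = cbdry K L k (ρ (k + 1) v) :=
    fun k v => LinearMap.congr_fun (hρ1 k) v
  induction n with
  | zero =>
    refine Finsupp.lhom_ext' fun c => LinearMap.ext_ring ?_
    change cbdry K L 1 (coneHomotopy ρ 1 (Finsupp.single c 1)) + 0 =
      Finsupp.single c 1 - ρ 1 (Finsupp.single c 1)
    rw [coneHomotopy_single, cbdry_cone]
    · simp [coneHomotopy]
    · simp [coneHomotopy, ← hcomm, hρ0]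
  | succ n ih =>
    refine Finsupp.lhom_ext' fun c => LinearMap.ext_ring ?_
    change cbdry K L (n + 2) (coneHomotopy ρ (n + 2) (Finsupp.single c 1)) +
        coneHomotopy ρ (n + 1) (cbdry K L (n + 1) (Finsupp.single c 1)) =
      Finsupp.single c 1 - ρ (n + 2) (Finsupp.single c 1)
    rw [coneHomotopy_single, cbdry_cone]
    · abel
    · have := LinearMap.congr_fun (ih (cbdry K L (n + 1) (Finsupp.single c 1)))
        (cbdry K L (n + 1) (Finsupp.single c 1))
      simp only [LinearMap.add_apply, LinearMap.comp_apply, LinearMap.sub_apply,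
        LinearMap.id_apply, cbdry_cbdry, map_zero, add_zero] at this
      rw [map_sub, map_sub, this, ← hcomm]
      abel

end Homotopy

section Comparison
variable {K}
variable {L : Type} [SemilatticeSup L]

/-- Split every chain after its first `a` entries, apply `D` to the initial segment, and multiply
back together. -/
def splitMap {a a' b n n' : ℕ} (h : a + b = n) (h' : a' + b = n')
    (D : CGrp K L a →ₗ[K] CGrp K L a') : CGrp K L n →ₗ[K] CGrp K L n' :=
  Finsupp.lsum K fun c => LinearMap.toSpanSingleton K _
    (joinProd h'
      (D (Finsupp.single (OChain.mk (fun i : Fin a => c.1 ⟨i, by omega⟩)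
        (fun _ _ hij => c.2 (Fin.lt_def.mpr (Fin.lt_def.mp hij)))) 1))
      (Finsupp.single (OChain.mk (fun j : Fin b => c.1 ⟨a + j, by omega⟩)
        (fun _ _ hij => c.2 (Fin.lt_def.mpr (Nat.add_lt_add_left (Fin.lt_def.mp hij) a)))) 1))

lemma splitMap_joinProd {a a' b n n' : ℕ} (h : a + b = n) (h' : a' + b = n')
    (D : CGrp K L a →ₗ[K] CGrp K L a') (χ : OChain L a) {ζ : CGrp K L b}
    (hζ : ζ ∈ Finsupp.supported K K {c : OChain L b | ∀ s r, c.1 s < χ.1 r}) :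
    splitMap h h' D (joinProd h (Finsupp.single χ 1) ζ) =
      joinProd h' (D (Finsupp.single χ 1)) ζ := by
  refine eq_of_mem_supported (f := (splitMap h h' D).comp (joinProd h (Finsupp.single χ 1)))
    (fun c hc => ?_) hζ
  rw [LinearMap.comp_apply, joinProd_single_of_lt h χ c hc]
  simp only [splitMap, Finsupp.lsum_single, LinearMap.toSpanSingleton_apply, one_smul]
  congr 3
  · congr 1
    refine Subtype.ext (funext fun i => ?_)
    exact concatT_of_lt h _ _ i.2
  · funext j
    refine (concatT_of_le h _ _ (Nat.le_add_right _ _)).trans ?_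
    exact congrArg c.1 (Fin.ext (Nat.add_sub_cancel_left _ _))

/-- Replacing the prefixes of a relative cycle by their images under a chain map `ρ` carried by
the cones `L_{≤ x₀}` does not change its relative homology class. -/
lemma sub_joinProd_mem {ρ : (n : ℕ) → CGrp K L n →ₗ[K] CGrp K L n} (hρ0 : ρ 0 = LinearMap.id)
    (hρ1 : ∀ n : ℕ, (ρ n).comp (cbdry K L n) = (cbdry K L n).comp (ρ (n + 1)))
    (hρ2 : ∀ (n : ℕ) (c : OChain L (n + 1)),
      ρ (n + 1) (Finsupp.single c 1) ∈ chainsIn K L (Set.Iic (c.1 0)) (n + 1))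
    {J : Set L} (hJ : IsLowerSet J) {p q n : ℕ} (h : p + 2 + q = n + 2)
    (s : Finset (OChain L (p + 2))) (ζ : OChain L (p + 2) → CGrp K L q)
    (hcyc : ∀ χ, ζ χ ∈ cyclesAt K L q)
    (hlt : ∀ χ, ζ χ ∈ Finsupp.supported K K {c : OChain L q | ∀ s r, c.1 s < χ.1 r})
    (hrel : cbdry K L (n + 1) (∑ χ ∈ s, joinProd h (Finsupp.single χ 1) (ζ χ)) ∈
      Finsupp.supported K K {c : OChain L (n + 1) | c.1 0 ∈ J}) :
    (∑ χ ∈ s, joinProd h (Finsupp.single χ 1) (ζ χ)) -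
        (∑ χ ∈ s, joinProd h (ρ (p + 2) (Finsupp.single χ 1)) (ζ χ)) ∈
      boundariesIn K L (n + 2) ⊔ chainsIn K L J (n + 2) := by
  have h1 : p + 1 + q = n + 1 := by omega
  have h3 : p + 3 + q = n + 3 := by omega
  have hsplit : (∑ χ ∈ s, joinProd h (Finsupp.single χ 1) (ζ χ)) -
        (∑ χ ∈ s, joinProd h (ρ (p + 2) (Finsupp.single χ 1)) (ζ χ)) =
      cbdry K L (n + 2) (∑ χ ∈ s,
        joinProd h3 (coneHomotopy ρ (p + 2) (Finsupp.single χ 1)) (ζ χ)) +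
      splitMap h1 h (coneHomotopy ρ (p + 1))
        (cbdry K L (n + 1) (∑ χ ∈ s, joinProd h (Finsupp.single χ 1) (ζ χ))) := by
    rw [← Finset.sum_sub_distrib, map_sum, map_sum, map_sum, ← Finset.sum_add_distrib]
    refine Finset.sum_congr rfl fun χ _ => ?_
    rw [← LinearMap.map_sub₂, ← coneHomotopy_spec hρ0 hρ1, map_add,
      LinearMap.add_apply, cbdry_joinProd h3 h _ (hcyc χ), cbdry_joinProd h h1 _ (hcyc χ)]
    congr 1
    rw [cbdry_single]
    simp only [map_sum, map_smul, LinearMap.sum_apply, LinearMap.smul_apply]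
    refine Finset.sum_congr rfl fun k _ => congrArg _ (splitMap_joinProd h1 h _ _ ?_).symm
    refine Finsupp.supported_mono ?_ (hlt χ)
    exact fun c hc s r => hc s (k.succAbove r)
  rw [hsplit]
  refine Submodule.add_mem_sup (LinearMap.mem_range_self _ _) ?_
  refine map_mem_of_mem_supported _ (fun c hc => ?_) hrel
  simp only [splitMap, Finsupp.lsum_single, LinearMap.toSpanSingleton_apply, one_smul]
  refine chainsIn_mono (I := Set.Iic (c.1 0)) (fun y hy => hJ hy hc) _
    (joinProd_mem_chainsIn h (coneHomotopy_mem_chainsIn hρ2 _ _) ?_)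
  exact Finsupp.single_mem_supported K _ fun r => c.2.antitone (Fin.zero_le _)

/-- Pieces of a synor complex over `x ∈ I` consist of chains whose largest element lies in `I`. -/
lemma SynorComplex.iSup_le_supported {P : Type} [PartialOrder P] (σ : SynorComplex K P) (n : ℕ)
    (I : Set P) :
    ⨆ y ∈ I, σ.S n y ≤ Finsupp.supported K K {c : OChain P (n + 1) | c.1 0 ∈ I} :=
  iSup₂_le fun y hy => (σ.graded n y).trans
    (Finsupp.supported_mono fun c (hc : c.1 0 = y) => show c.1 0 ∈ I from hc ▸ hy)

end Comparison

/-- Let `L` be a finite lattice with `0̂ ≠ 1̂`, `L̄ = L ∖ {0̂}`,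
`Ľ = L ∖ {0̂, 1̂}`.  Fix a synor complex `S_*(L̄) ⊆ C̃_*(L̄)` and maps `ρ_k` satisfying
(R0)–(R2).  Let `γ = 1̂ * ζ ∈ S_m(L̄)^{(1̂)}` be a principal synor chain, `1 ≤ ℓ ≤ m`, and
let `γ = Σ_{χ ∈ X_ℓ^γ} χ * ζ_χ` be its `ℓ`-representation.  Then `γ` is homologous to
`Σ_{χ ∈ X_ℓ^γ} π(ρ_ℓ(χ) ⧢ ζ_χ)` in the relative homology `H̃_m(L̄, Ľ)`, i.e. their
difference is a boundary plus a chain supported in `Ľ`. -/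
theorem representation_shuffled_relative_homologous
    (L : Type) [Lattice L] [BoundedOrder L] [Fintype L] (hbt : (⊥ : L) ≠ ⊤)
    (σ : SynorComplex K (Punct L))
    (ρ : (nn : ℕ) → CGrp K (Punct L) nn →ₗ[K] CGrp K (Punct L) nn)
    (hρ0 : ρ 0 = LinearMap.id)
    (hρS : ∀ (nn : ℕ) (f : CGrp K (Punct L) nn),
      ρ nn f ∈ idealPart K (Punct L) σ.S Set.univ nn)
    (hρ1 : ∀ nn : ℕ,
      (ρ nn).comp (cbdry K (Punct L) nn) = (cbdry K (Punct L) nn).comp (ρ (nn + 1)))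
    (hρ2 : ∀ (nn : ℕ) (c : OChain (Punct L) (nn + 1)),
      ρ (nn + 1) (Finsupp.single c 1) ∈ ⨆ y ∈ Set.Iic (c.1 0), σ.S nn y)
    (m ℓ : ℕ) (h1 : 1 ≤ ℓ) (h2 : ℓ ≤ m)
    (γ : CGrp K (Punct L) (m + 1))
    (hγ : γ ∈ σ.S m ⟨(⊤ : L), fun h => hbt h.symm⟩)
    -- the ℓ-representation of γ
    (ζA : OChain (Punct L) (ℓ + 1) → CGrp K (Punct L) (m - ℓ))
    (hA0 : ∀ χ : OChain (Punct L) (ℓ + 1),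
      ζA χ ∈ cyclesAt K (Punct L) (m - ℓ) ⊓
        idealPart K (Punct L) σ.S (Set.Iio (χ.1 (Fin.last ℓ))) (m - ℓ))
    (hA1 : ∀ χ : OChain (Punct L) (ℓ + 1), ζA χ ∈ Finsupp.supported K K
      {c : OChain (Punct L) (m - ℓ) |
        ∀ (s : Fin (m - ℓ)) (r : Fin (ℓ + 1)), c.1 s < χ.1 r})
    (hA2 : ∀ χ ∉ initSegs K (Punct L) γ (ℓ + 1) (by omega), ζA χ = 0)
    (hA3 : γ = ∑ᶠ χ ∈ initSegs K (Punct L) γ (ℓ + 1) (by omega),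
      castCGrp K (Punct L) (by omega) (prependC K (Punct L) χ (ζA χ))) :
    γ - (∑ᶠ χ ∈ initSegs K (Punct L) γ (ℓ + 1) (by omega),
        piProj K (Punct L) (m + 1)
          (castMGrp K (Punct L) (show (ℓ + 1) + (m - ℓ) = m + 1 by omega)
            (shufLin K (Punct L) (ℓ + 1) (m - ℓ)
              (iotaCM K (Punct L) (ℓ + 1) (ρ (ℓ + 1) (Finsupp.single χ 1)))
              (iotaCM K (Punct L) (m - ℓ) (ζA χ))))) ∈
      boundariesIn K (Punct L) (m + 1) ⊔
        chainsIn K (Punct L) {y : Punct L | (y : L) ≠ ⊤} (m + 1) := by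
  classical
  obtain ⟨p, rfl⟩ : ∃ p, ℓ = p + 1 := ⟨ℓ - 1, by omega⟩
  obtain ⟨n, rfl⟩ : ∃ n, m = n + 1 := ⟨m - 1, by omega⟩
  have : ∀ k, Finite (OChain (Punct L) k) := fun k =>
    inferInstanceAs (Finite {c : Fin k → Punct L // StrictAnti c})
  have hfin := Set.toFinite (initSegs K (Punct L) γ (p + 1 + 1) (by omega))
  have h : p + 2 + (n + 1 - (p + 1)) = n + 2 := by omega
  have hγ' : γ = ∑ χ ∈ hfin.toFinset, joinProd h (Finsupp.single χ 1) (ζA χ) := by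
    refine hA3.trans ?_
    rw [finsum_mem_eq_finite_toFinset_sum _ hfin]
    exact Finset.sum_congr rfl fun χ _ => castCGrp_prependC h χ (hA1 χ)
  have hbd := σ.iSup_le_supported n _ (σ.strict n _ γ hγ)
  rw [finsum_mem_eq_finite_toFinset_sum _ hfin]
  simp only [piProj_shufLin]
  have key := sub_joinProd_mem hρ0 hρ1 (J := {y : Punct L | (y : L) ≠ ⊤})
    (fun k c => Finsupp.supported_mono
      (fun d hd r => (d.2.antitone (Fin.zero_le r)).trans hd)
      (σ.iSup_le_supported k _ (hρ2 k c)))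
    (fun x y hyx hx hy => hx (top_le_iff.mp (hy ▸ hyx))) h hfin.toFinset ζA
    (fun χ => (hA0 χ).1) hA1
    (by
      rw [← hγ']
      refine Finsupp.supported_mono (fun c hc => ?_) hbd
      exact fun htop => (ne_of_lt hc) htop)
  rw [← hγ'] at key
  exact key

end
end
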